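/- arXiv:1309.2065 — 2 statements merged into one kernel-verified Lean document; each statement's English description precedes it below -/
import Mathlib

section
/- Let p be a prime, m ≥ 1, and let S, T ∈ S_m(ℤ_p)^×. Let Ω̃(S,T) = {W ∈ M_m(ℤ_p) : det W ≠ 0 and S ∼ T[W^{-1}]}, a set stable under left multiplication by GL_m(ℤ_p). Then the set GL_m(ℤ_p)\Ω̃(S,T) of left GL_m(ℤ_p)-orbits is finite, and α_p(S,T) = #(GL_m(ℤ_p)\Ω̃(S,T)) · p^{(ν_p(det T) - ν_p(det S))/2} · α_p(S). -/
/-!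
Write `S_e` for the even symmetric matrices and let `X` range over integral solutions of the
congruence `S[X] ≡ T mod p^a S_e`, counted modulo `p^a`, with `a` large.

By a Hensel argument (`KMaux.hensel`), every `S + Y` with `Y ∈ p^c S_e` equals `S[V]` for some
unimodular `V`. Hence each solution `X` of the congruence can be multiplied on the left by a
unimodular matrix to become an exact solution of `S[X] = T` (`KMaux.exists_exact`), and the
solutions are partitioned by the cosets `GL_m(ℤ_p) X` of exact solutions. These are exactly the
left cosets of `Ω̃(S,T)` (`KMaux.cosets_eq`). They are finitely many, because each is a union of
residue classes modulo `p^a` once `a > ν(det T)` (`KMaux.finite_cosets`).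

It remains to count the solutions in the coset of one exact solution `X`, where
`d = ν(det X) = (ν(det T) - ν(det S))/2`. By the Smith normal form one may take `X = D` diagonal.
The products `U D` solving the congruence are those for which `S[U] - S` lies in the lattice
`D⁻¹ (p^a S_e) D⁻¹`, which contains `p^a S_e` with index `p^{(m+1)d}`. By the Hensel argument
all classes of this lattice have the same number of solutions `U` (`KMaux.cnt_lattice`), while
right multiplication by `D` modulo `p^a` is `p^{md}`-to-one (`KMaux.cnt_mul_diag`). So each coset
contributes `p^d` times the number of solutions of `S[U] ≡ S` (`KMaux.cnt_coset`). Finally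
`KMaux.cnt_lattice` with the lattice `p^a S_e` at level `a + 1` shows that the normalized counts for
`(S, S)` are eventually constant, so that all limits exist and the identity of counts passes to the
densities.
-/

open Matrix Filter

open scoped Classical

noncomputable section

namespace KM

variable (p : ℕ) [Fact p.Prime]

/-- Entrywise coercion of a `ℤ_[p]`-matrix into `ℚ_[p]`. -/
def q {n m : Type*} (A : Matrix n m ℤ_[p]) : Matrix n m ℚ_[p] :=
  A.map (fun x : ℤ_[p] => (x : ℚ_[p]))

/-- `ℤ_p`-equivalence of symmetric matrices with entries in `ℤ_p`. -/
def IntEquiv {n : Type*} [Fintype n] [DecidableEq n]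
    (A B : Matrix n n ℤ_[p]) : Prop :=
  ∃ U : Matrix n n ℤ_[p], IsUnit U.det ∧ B = Uᵀ * A * U

/-- `ℤ_p`-equivalence of `ℤ_p`-matrices up to reindexing (for index types of
the same cardinality). -/
def IntEquivR {n n' : Type*} [Fintype n] [DecidableEq n] [Fintype n'] [DecidableEq n']
    (A : Matrix n n ℤ_[p]) (B : Matrix n' n' ℤ_[p]) : Prop :=
  ∃ e : n ≃ n', IntEquiv p A (B.submatrix e e)

/-- `ℤ_p`-equivalence of symmetric matrices with entries in `ℚ_p`. -/
def RatEquiv {n : Type*} [Fintype n] [DecidableEq n]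
    (A B : Matrix n n ℚ_[p]) : Prop :=
  ∃ U : Matrix n n ℤ_[p], IsUnit U.det ∧ B = (q p U)ᵀ * A * (q p U)

/-- `ℤ_p`-equivalence of `ℚ_p`-matrices up to reindexing. -/
def RatEquivR {n n' : Type*} [Fintype n] [DecidableEq n] [Fintype n'] [DecidableEq n']
    (A : Matrix n n ℚ_[p]) (B : Matrix n' n' ℚ_[p]) : Prop :=
  ∃ e : n ≃ n', RatEquiv p A (B.submatrix e e)

/-- A matrix over `ℚ_p` is half-integral: symmetric, diagonal entries in `ℤ_p`,
off-diagonal entries in `(1/2)ℤ_p`. -/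
def IsHalfIntegral {n : Type*} [DecidableEq n] (A : Matrix n n ℚ_[p]) : Prop :=
  A.IsSymm ∧ ∀ i j, ∃ x : ℤ_[p], A i j = (if i = j then 1 else 2⁻¹) * (x : ℚ_[p])

/-- `A ∈ 4·L_{m,p}`. -/
def InFourL {n : Type*} [DecidableEq n] (A : Matrix n n ℚ_[p]) : Prop :=
  IsHalfIntegral p ((4 : ℚ_[p])⁻¹ • A)

/-- The rank-one matrix `rᵀ r` viewed over `ℚ_p`. -/
def outer {n : Type*} (r : n → ℤ_[p]) : Matrix n n ℚ_[p] :=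
  Matrix.of fun i j => ((r i : ℚ_[p]) * (r j : ℚ_[p]))

/-- The matrix `A^{(1)} = [[1, r/2], [rᵀ/2, (A + rᵀr)/4]]`. -/
def Aone {n : Type*} [Fintype n] [DecidableEq n]
    (A : Matrix n n ℚ_[p]) (r : n → ℤ_[p]) :
    Matrix (Fin 1 ⊕ n) (Fin 1 ⊕ n) ℚ_[p] :=
  Matrix.fromBlocks 1 (Matrix.of fun _ j => (r j : ℚ_[p]) / 2)
    (Matrix.of fun i _ => (r i : ℚ_[p]) / 2)
    ((4 : ℚ_[p])⁻¹ • (A + outer p r))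

/-- A `ℚ_p`-matrix has all entries in `ℤ_p`. -/
def IsIntegral {n m : Type*} (A : Matrix n m ℚ_[p]) : Prop :=
  ∀ i j, ∃ x : ℤ_[p], A i j = (x : ℚ_[p])

/-- Membership in `L^{(0)}`: nondegenerate, symmetric, integral, even diagonal. -/
def InL0 {n : Type*} [Fintype n] [DecidableEq n] (A : Matrix n n ℚ_[p]) : Prop :=
  A.IsSymm ∧ A.det ≠ 0 ∧ ∀ i j, ∃ x : ℤ_[p], A i j = (if i = j then 2 else 1) * (x : ℚ_[p])

/-- Membership in `L'_{m,p}`. -/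
def InLprime {n : Type*} [Fintype n] [DecidableEq n] (A : Matrix n n ℚ_[p]) : Prop :=
  IsHalfIntegral p A ∧ ∃ r : n → ℤ_[p], InFourL p (A + outer p r)

/-- Membership in `L^{(1)}`: nondegenerate element of `L'`. -/
def InL1 {n : Type*} [Fintype n] [DecidableEq n] (A : Matrix n n ℚ_[p]) : Prop :=
  InLprime p A ∧ A.det ≠ 0

/-- `B[W⁻¹] = (W⁻¹)ᵀ B W⁻¹`. -/
def conjInv {n : Type*} [Fintype n] [DecidableEq n]
    (B : Matrix n n ℚ_[p]) (W : Matrix n n ℤ_[p]) : Matrix n n ℚ_[p] :=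
  ((q p W)⁻¹)ᵀ * B * (q p W)⁻¹

/-- `Ω̃(C)` for `C` an integral symmetric matrix. -/
def OmS {n : Type*} [Fintype n] [DecidableEq n] (C : Matrix n n ℤ_[p]) :
    Set (Matrix n n ℤ_[p]) :=
  {W | W.det ≠ 0 ∧ (conjInv p (q p C) W).IsSymm ∧ IsIntegral p (conjInv p (q p C) W)}

/-- `Ω̃^{(0)}(B)`. -/
def OmT0 {n : Type*} [Fintype n] [DecidableEq n] (B : Matrix n n ℚ_[p]) :
    Set (Matrix n n ℤ_[p]) :=
  {W | W.det ≠ 0 ∧ InL0 p (conjInv p B W)}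

/-- `Ω̃^{(1)}(B)`. -/
def OmT1 {n : Type*} [Fintype n] [DecidableEq n] (B : Matrix n n ℚ_[p]) :
    Set (Matrix n n ℤ_[p]) :=
  {W | W.det ≠ 0 ∧ InL1 p (conjInv p B W)}

/-- `Ω̃^{(j)}(B)` for `j ∈ {0,1}`. -/
def OmTJ {n : Type*} [Fintype n] [DecidableEq n] (j : ℕ) (B : Matrix n n ℚ_[p]) :
    Set (Matrix n n ℤ_[p]) :=
  {W | W.det ≠ 0 ∧ if j = 0 then InL0 p (conjInv p B W) else InL1 p (conjInv p B W)}

/-- The double coset `D_{m,i} = GL·diag(1_{m-i}, p·1_i)·GL`. -/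
def Dset {n : Type*} [Fintype n] [DecidableEq n] (i : ℕ) : Set (Matrix n n ℤ_[p]) :=
  {W | ∃ s : Finset n, s.card = i ∧
    ∃ U V : Matrix n n ℤ_[p], IsUnit U.det ∧ IsUnit V.det ∧
      W = U * Matrix.diagonal (fun j => if j ∈ s then (p : ℤ_[p]) else 1) * V}

/-- `W` and `W'` lie in the same left `GL_m(ℤ_p)`-coset. -/
def SameLeft {n : Type*} [Fintype n] [DecidableEq n] (W W' : Matrix n n ℤ_[p]) : Prop :=
  ∃ U : Matrix n n ℤ_[p], IsUnit U.det ∧ W' = U * W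

/-- `W` and `W'` lie in the same right `GL_m(ℤ_p)`-coset. -/
def SameRight {n : Type*} [Fintype n] [DecidableEq n] (W W' : Matrix n n ℤ_[p]) : Prop :=
  ∃ U : Matrix n n ℤ_[p], IsUnit U.det ∧ W' = W * U

/-- `φ` induces a bijection between the sets of left `GL(ℤ_p)`-cosets of `Ω` and `Ω'`. -/
def InducesLeftBij {n n' : Type*} [Fintype n] [DecidableEq n] [Fintype n'] [DecidableEq n']
    (φ : Matrix n n ℤ_[p] → Matrix n' n' ℤ_[p])
    (Ω : Set (Matrix n n ℤ_[p])) (Ω' : Set (Matrix n' n' ℤ_[p])) : Prop :=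
  (∀ W ∈ Ω, φ W ∈ Ω') ∧
  (∀ W₁ ∈ Ω, ∀ W₂ ∈ Ω, (SameLeft p W₁ W₂ ↔ SameLeft p (φ W₁) (φ W₂))) ∧
  (∀ V ∈ Ω', ∃ W ∈ Ω, SameLeft p (φ W) V)

/-- `A[Y] ≡ B mod p^a S_e`. -/
def densCond {n n' : Type*} [Fintype n] [Fintype n'] [DecidableEq n']
    (A : Matrix n n ℤ_[p]) (B : Matrix n' n' ℤ_[p]) (a : ℕ)
    (Y : Matrix n n' ℤ_[p]) : Prop :=
  ∀ i j, ((p : ℤ_[p]) ^ a * (if i = j then 2 else 1)) ∣ (Yᵀ * A * Y - B) i j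

/-- `#A_a(A,B)`: the number of solutions mod `p^a`. -/
def Acount {n n' : Type*} [Fintype n] [Fintype n'] [DecidableEq n']
    (A : Matrix n n ℤ_[p]) (B : Matrix n' n' ℤ_[p]) (a : ℕ) : ℕ :=
  Nat.card {X : Matrix n n' (ZMod (p ^ a)) //
    ∃ Y : Matrix n n' ℤ_[p], Y.map (PadicInt.toZModPow a) = X ∧ densCond p A B a Y}

/-- The local density `α_p(A,B)`. -/
def locDensPair {n n' : Type*} [Fintype n] [Fintype n'] [DecidableEq n']
    (A : Matrix n n ℤ_[p]) (B : Matrix n' n' ℤ_[p]) : ℝ :=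
  limUnder atTop (fun a : ℕ =>
    (2 : ℝ) ^ (-(if Fintype.card n = Fintype.card n' then (1 : ℤ) else 0)) *
    (p : ℝ) ^ ((a : ℤ) * (-((Fintype.card n : ℤ) * (Fintype.card n' : ℤ)) +
      ((Fintype.card n' : ℤ) * ((Fintype.card n' : ℤ) + 1)) / 2)) *
    (Acount p A B a : ℝ))

/-- The local density `α_p(A) = α_p(A,A)`. -/
def locDens {n : Type*} [Fintype n] [DecidableEq n] (A : Matrix n n ℤ_[p]) : ℝ :=
  locDensPair p A A

/-- `χ_p` on units, for `p` odd. -/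
def chiOdd (u : ℤ_[p]) : ℤ :=
  if IsSquare (u : ℚ_[p]) then 1 else if IsUnit u then -1 else 0

/-- `χ_2` on units. -/
def chi2 (u : ℤ_[2]) : ℤ :=
  if IsSquare (u : ℚ_[2]) then 1
  else if IsSquare (((5 * u : ℤ_[2]) : ℚ_[2])) then -1 else 0

/-- The set of `GL(ℤ_p)`-equivalence classes of elements of `S`. -/
def classesOf {n : Type*} [Fintype n] [DecidableEq n]
    (S : Set (Matrix n n ℤ_[p])) : Set (Set (Matrix n n ℤ_[p])) :=
  (fun A => {A' | IntEquiv p A A'}) '' S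

end KM

namespace KMaux

section

variable {p : ℕ} [Fact p.Prime] {m : ℕ}

/-! ### Even symmetric matrices -/

/-- `B ∈ p^a S_m(ℤ_p)_e`, encoded by the fact that the even symmetric matrices are
exactly the matrices `Z + Zᵀ`. -/
def Pe (a : ℕ) (B : Matrix (Fin m) (Fin m) ℤ_[p]) : Prop :=
  ∃ Z : Matrix (Fin m) (Fin m) ℤ_[p], B = (p : ℤ_[p]) ^ a • (Z + Zᵀ)

lemma p_ne_zero : (p : ℤ_[p]) ≠ 0 := by
  exact_mod_cast (Fact.out : p.Prime).ne_zero

lemma two_dvd_p_pow {a : ℕ} (ha : 1 ≤ a) : (2 : ℤ_[p]) ∣ (p : ℤ_[p]) ^ a := by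
  rcases (Fact.out : p.Prime).eq_two_or_odd' with h | h
  · refine dvd_trans ?_ (dvd_pow_self _ (by omega))
    have : (p : ℤ_[p]) = 2 := by exact_mod_cast congrArg (Nat.cast (R := ℤ_[p])) h
    rw [this]
  · apply IsUnit.dvd
    rw [PadicInt.isUnit_iff]
    have : ‖((2 : ℕ) : ℤ_[p])‖ = 1 := by
      rw [PadicInt.norm_natCast_eq_one_iff]
      exact h.coprime_two_right
    exact_mod_cast this

lemma Pe.symm {a : ℕ} {B : Matrix (Fin m) (Fin m) ℤ_[p]} (h : Pe a B) : B.IsSymm := by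
  obtain ⟨Z, rfl⟩ := h
  simp [Matrix.IsSymm, add_comm]

lemma pe_iff {a : ℕ} {B : Matrix (Fin m) (Fin m) ℤ_[p]} (hB : B.IsSymm) :
    Pe a B ↔ ∀ i j, ((p : ℤ_[p]) ^ a * (if i = j then 2 else 1)) ∣ B i j := by
  constructor
  · rintro ⟨Z, rfl⟩ i j
    split_ifs with h
    · subst h
      exact ⟨Z i i, by simp; ring⟩
    · exact ⟨Z i j + Z j i, by simp⟩
  · intro h
    choose f hf using h
    refine ⟨Matrix.of fun i j => if i ≤ j then f i j else 0, ?_⟩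
    ext i j
    simp only [Matrix.smul_apply, Matrix.add_apply, of_apply, transpose_apply, smul_eq_mul]
    rcases lt_trichotomy i j with h | h | h
    · rw [if_pos h.le, if_neg (not_le.2 h), hf, if_neg h.ne]; ring
    · subst h; rw [if_pos le_rfl, hf, if_pos rfl]; ring
    · rw [if_neg (not_le.2 h), if_pos h.le, ← hB.apply, hf, if_neg h.ne]; ring

lemma Pe.add {a : ℕ} {B C : Matrix (Fin m) (Fin m) ℤ_[p]} (h : Pe a B) (h' : Pe a C) :
    Pe a (B + C) := by
  obtain ⟨Z, rfl⟩ := h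
  obtain ⟨Z', rfl⟩ := h'
  refine ⟨Z + Z', ?_⟩
  rw [← smul_add, transpose_add]
  congr 1
  abel

lemma Pe.neg {a : ℕ} {B : Matrix (Fin m) (Fin m) ℤ_[p]} (h : Pe a B) : Pe a (-B) := by
  obtain ⟨Z, rfl⟩ := h
  refine ⟨-Z, ?_⟩
  rw [← smul_neg, transpose_neg]
  congr 1
  abel

lemma Pe.conj {a : ℕ} {B : Matrix (Fin m) (Fin m) ℤ_[p]} (h : Pe a B)
    (V : Matrix (Fin m) (Fin m) ℤ_[p]) : Pe a (Vᵀ * B * V) := by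
  obtain ⟨Z, rfl⟩ := h
  refine ⟨Vᵀ * Z * V, ?_⟩
  simp [Matrix.mul_add, Matrix.add_mul, Matrix.mul_assoc]

lemma Pe.smul {a : ℕ} {B : Matrix (Fin m) (Fin m) ℤ_[p]} (h : Pe a B) (c : ℤ_[p]) :
    Pe a (c • B) := by
  obtain ⟨Z, rfl⟩ := h
  refine ⟨c • Z, ?_⟩
  rw [smul_comm]
  simp

lemma Pe.mono {a b : ℕ} (hab : a ≤ b) {B : Matrix (Fin m) (Fin m) ℤ_[p]} (h : Pe b B) :
    Pe a B := by
  obtain ⟨Z, rfl⟩ := h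
  obtain ⟨k, rfl⟩ := Nat.exists_eq_add_of_le hab
  refine ⟨(p : ℤ_[p]) ^ k • Z, ?_⟩
  rw [transpose_smul, ← smul_add, smul_smul, pow_add]

/-- Changing `X` modulo `p^a` changes `S[X]` by an element of `p^a S_m(ℤ_p)_e`. For `p = 2` this
uses `a ≥ 1`, so that the quadratic term `p^{2a} S[Z]` is even. -/
lemma pe_perturb {a : ℕ} (ha : 1 ≤ a) {S : Matrix (Fin m) (Fin m) ℤ_[p]} (hS : S.IsSymm)
    (X Z : Matrix (Fin m) (Fin m) ℤ_[p]) :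
    Pe a ((X + (p : ℤ_[p]) ^ a • Z)ᵀ * S * (X + (p : ℤ_[p]) ^ a • Z) - Xᵀ * S * X) := by
  obtain ⟨u, hu⟩ := two_dvd_p_pow (p := p) ha
  refine ⟨Xᵀ * S * Z + u • (Zᵀ * S * Z), ?_⟩
  have h2 : ((p : ℤ_[p]) ^ a * (p : ℤ_[p]) ^ a) • (Zᵀ * S * Z)
      = (p : ℤ_[p]) ^ a • (u • (Zᵀ * S * Z) + u • (Zᵀ * S * Z)) := by
    rw [mul_smul]
    congr 1
    rw [← add_smul, hu]
    congr 1
    ring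
  have hS' : Sᵀ = S := hS
  simp only [transpose_add, transpose_smul, transpose_mul, transpose_transpose, hS',
    Matrix.mul_add, Matrix.add_mul, Matrix.mul_smul, Matrix.smul_mul, smul_smul,
    smul_add, Matrix.mul_assoc] at h2 ⊢
  rw [h2]
  abel

/-! ### Determinants -/

lemma dvd_det_sub {a : ℕ} {A B C : Matrix (Fin m) (Fin m) ℤ_[p]}
    (h : A = B + (p : ℤ_[p]) ^ a • C) : (p : ℤ_[p]) ^ a ∣ A.det - B.det := by
  rw [← Ideal.mem_span_singleton, ← Ideal.Quotient.eq, RingHom.map_det, RingHom.map_det]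
  congr 1
  ext i j
  simp only [RingHom.mapMatrix_apply, map_apply, h, Matrix.add_apply, Matrix.smul_apply,
    smul_eq_mul, map_add, map_mul]
  rw [Ideal.Quotient.eq_zero_iff_mem.2 (Ideal.mem_span_singleton_self _)]
  simp

lemma isUnit_det_one_add {a : ℕ} (ha : 1 ≤ a) (C : Matrix (Fin m) (Fin m) ℤ_[p]) :
    IsUnit (1 + (p : ℤ_[p]) ^ a • C).det := by
  have h := dvd_det_sub (A := 1 + (p : ℤ_[p]) ^ a • C) rfl
  rw [det_one] at h
  by_contra hn
  have h1 : (1 + (p : ℤ_[p]) ^ a • C).det ∈ IsLocalRing.maximalIdeal ℤ_[p] := hn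
  have h2 : (1 + (p : ℤ_[p]) ^ a • C).det - 1 ∈ IsLocalRing.maximalIdeal ℤ_[p] := by
    rw [PadicInt.maximalIdeal_eq_span_p, Ideal.mem_span_singleton]
    exact (dvd_pow_self _ (by omega)).trans h
  have h3 := Ideal.sub_mem _ h1 h2
  rw [sub_sub_cancel] at h3
  exact (Ideal.ne_top_iff_one _).1 (IsLocalRing.maximalIdeal.isMaximal _).ne_top h3

/-- A multiple of `p^a` with `a > ν_p(x)` does not affect `ν_p`. -/
lemma val_eq_of_dvd {x y : ℤ_[p]} (hx : x ≠ 0) {a : ℕ} (ha : x.valuation < a)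
    (h : (p : ℤ_[p]) ^ a ∣ y - x) : y ≠ 0 ∧ y.valuation = x.valuation := by
  have key : ∀ z : ℤ_[p], z ≠ 0 → ∀ n, (p : ℤ_[p]) ^ n ∣ z ↔ n ≤ z.valuation := by
    intro z hz n
    rw [← PadicInt.mem_span_pow_iff_le_valuation z hz, Ideal.mem_span_singleton]
  have hy : y ≠ 0 := by
    rintro rfl
    rw [zero_sub, dvd_neg, key x hx] at h
    omega
  refine ⟨hy, ?_⟩
  apply le_antisymm
  · by_contra hlt
    have h1 : (p : ℤ_[p]) ^ (x.valuation + 1) ∣ y := (key y hy _).2 (by omega)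
    have h2 : (p : ℤ_[p]) ^ (x.valuation + 1) ∣ y - x := (pow_dvd_pow _ (by omega)).trans h
    have h3 := dvd_sub h1 h2
    rw [sub_sub_cancel, key x hx] at h3
    omega
  · rw [← key y hy]
    have h1 : (p : ℤ_[p]) ^ x.valuation ∣ x := (key x hx _).2 le_rfl
    have h2 : (p : ℤ_[p]) ^ x.valuation ∣ y - x := (pow_dvd_pow _ ha.le).trans h
    have := dvd_add h2 h1
    rwa [sub_add_cancel] at this

lemma exists_unit_mul_eq_pow {x : ℤ_[p]} (hx : x ≠ 0) :
    ∃ u : ℤ_[p], u * x = (p : ℤ_[p]) ^ x.valuation := by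
  refine ⟨((PadicInt.unitCoeff hx)⁻¹ : ℤ_[p]ˣ), ?_⟩
  have h := PadicInt.unitCoeff_spec hx
  rw [Units.inv_mul_eq_iff_eq_mul]
  exact h

/-- A quasi-inverse of a nondegenerate `X`: `X⁻¹` becomes integral after scaling by
`p^{ν_p(det X)}`. -/
lemma exists_quasi_inv {X : Matrix (Fin m) (Fin m) ℤ_[p]} (hX : X.det ≠ 0) :
    ∃ X' : Matrix (Fin m) (Fin m) ℤ_[p],
      X' * X = (p : ℤ_[p]) ^ X.det.valuation • 1 ∧ X * X' = (p : ℤ_[p]) ^ X.det.valuation • 1 := by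
  obtain ⟨u, hu⟩ := exists_unit_mul_eq_pow hX
  refine ⟨u • X.adjugate, ?_, ?_⟩
  · rw [Matrix.smul_mul, adjugate_mul, smul_smul, hu]
  · rw [Matrix.mul_smul, mul_adjugate, smul_smul, hu]

/-! ### A Hensel lemma for symmetric matrices -/

/-- A square root of `1 + 4N`, in the form `1 + 2W` with `W + W² = N`, obtained by iterating
`W ↦ N - W²` on the compact space of matrices divisible by `p`. -/
lemma exists_quad_root (S N : Matrix (Fin m) (Fin m) ℤ_[p])
    (hN : Nᵀ * S = S * N) (M : Matrix (Fin m) (Fin m) ℤ_[p]) (hM : N = (p : ℤ_[p]) • M) :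
    ∃ W : Matrix (Fin m) (Fin m) ℤ_[p], Wᵀ * S = S * W ∧
      (∃ Z, W = (p : ℤ_[p]) • Z) ∧ W + W * W = N := by
  let F : ℕ → Set (Matrix (Fin m) (Fin m) ℤ_[p]) := fun k =>
    {W | Wᵀ * S = S * W} ∩ (Set.range fun Z : Matrix (Fin m) (Fin m) ℤ_[p] => (p : ℤ_[p]) • Z) ∩
      (fun W => W + W * W - N) ⁻¹'
        (Set.range fun Z : Matrix (Fin m) (Fin m) ℤ_[p] => (p : ℤ_[p]) ^ k • Z)
  have : CompactSpace (Matrix (Fin m) (Fin m) ℤ_[p]) :=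
    inferInstanceAs (CompactSpace (Fin m → Fin m → ℤ_[p]))
  have hcl : ∀ c : ℤ_[p],
      IsClosed (Set.range fun Z : Matrix (Fin m) (Fin m) ℤ_[p] => c • Z) := fun c =>
    (isCompact_range (by fun_prop)).isClosed
  have hFcl : ∀ k, IsClosed (F k) := by
    intro k
    refine IsClosed.inter (IsClosed.inter (isClosed_eq (by fun_prop) (by fun_prop)) (hcl _)) ?_
    exact (hcl _).preimage (by fun_prop)
  -- The iterates `W_{k+1} = N - W_k²` are polynomials in `N`, so they commute with `N`.
  have hne : ∀ k, ∃ W ∈ F k, Commute W N := by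
    intro k
    induction k with
    | zero =>
      refine ⟨0, ⟨⟨by simp, ⟨0, by simp⟩⟩, ⟨-N, by simp⟩⟩, Commute.zero_left _⟩
    | succ k ih =>
      obtain ⟨W, ⟨⟨h1, Z, hZ⟩, Z', hZ'⟩, hc⟩ := ih
      simp only at hZ hZ'
      have h1' : Wᵀ * S = S * W := h1
      refine ⟨N - W * W, ⟨⟨?_, ?_⟩, ?_⟩, ?_⟩
      · change (N - W * W)ᵀ * S = S * (N - W * W)
        rw [transpose_sub, transpose_mul, Matrix.sub_mul, Matrix.mul_sub, hN, Matrix.mul_assoc, h1',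
          ← Matrix.mul_assoc, h1', Matrix.mul_assoc]
      · refine ⟨M - Z * W, ?_⟩
        simp only
        rw [hM, smul_sub, ← Matrix.smul_mul, hZ]
      · have e : (N - W * W) + (N - W * W) * (N - W * W) - N
            = ((p : ℤ_[p]) ^ k • Z') * ((W * W - N) - W) := by
          rw [hZ']
          have := hc.eq
          simp only [Matrix.sub_mul, Matrix.mul_sub, Matrix.add_mul]
          have e1 : W * W * N = N * (W * W) := by
            rw [Matrix.mul_assoc, this, ← Matrix.mul_assoc, this, Matrix.mul_assoc]
          simp only [Matrix.mul_assoc] at e1 ⊢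
          rw [e1, this]
          abel
        refine ⟨Z' * (Z * W - M - Z), ?_⟩
        have e2 : W * W - N - W = (p : ℤ_[p]) • (Z * W - M - Z) := by
          rw [smul_sub, smul_sub, ← hM, ← Matrix.smul_mul, hZ]
        simp only
        rw [e, e2, Matrix.smul_mul, Matrix.mul_smul, smul_smul, pow_succ]
      · exact (Commute.refl N).sub_left (hc.mul_left hc)
  have hmono : ∀ k, F (k + 1) ⊆ F k := by
    rintro k W ⟨h, Z, hZ⟩
    refine ⟨h, (p : ℤ_[p]) • Z, ?_⟩
    rw [← hZ]
    simp only
    rw [smul_smul, pow_succ]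
  obtain ⟨W, hW⟩ := IsCompact.nonempty_iInter_of_sequence_nonempty_isCompact_isClosed F hmono
    (fun k => let ⟨W, h, _⟩ := hne k; ⟨W, h⟩) (hFcl 0).isCompact hFcl
  rw [Set.mem_iInter] at hW
  refine ⟨W, (hW 0).1.1, ?_, ?_⟩
  · obtain ⟨Z, hZ⟩ := (hW 0).1.2
    exact ⟨Z, hZ.symm⟩
  · rw [← sub_eq_zero]
    ext i j
    rw [Matrix.zero_apply]
    by_contra hne'
    obtain ⟨Z, hZ⟩ := (hW (((W + W * W - N) i j).valuation + 1)).2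
    have : (p : ℤ_[p]) ^ (((W + W * W - N) i j).valuation + 1) ∣ (W + W * W - N) i j := by
      exact ⟨Z i j, congrFun (congrFun hZ.symm i) j⟩
    rw [← Ideal.mem_span_singleton, PadicInt.mem_span_pow_iff_le_valuation _ hne'] at this
    omega

/-- Every symmetric matrix `S + Y` close enough to `S` is integrally equivalent to `S`, through the
square root `V` of `1 + S⁻¹Y`; since `V` is self-adjoint for `S`, `Vᵀ S V = S V² = S + Y`. -/
lemma hensel {S : Matrix (Fin m) (Fin m) ℤ_[p]} (hS : S.IsSymm) (hd : S.det ≠ 0) :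
    ∃ c : ℕ, ∀ Y, Pe c Y → ∃ V : Matrix (Fin m) (Fin m) ℤ_[p],
      IsUnit V.det ∧ Vᵀ * S * V = S + Y := by
  refine ⟨S.det.valuation + 3, ?_⟩
  rintro Y ⟨Z, hY⟩
  obtain ⟨S', h1, h2⟩ := exists_quasi_inv hd
  obtain ⟨u, hu⟩ := two_dvd_p_pow (p := p) le_rfl
  rw [pow_one] at hu
  set s := S.det.valuation
  -- `N = S⁻¹ Y / 4`
  set N := (p : ℤ_[p]) • ((u * u) • (S' * (Z + Zᵀ))) with hNdef
  have hSN : S * N = ((p : ℤ_[p]) * (u * u) * (p : ℤ_[p]) ^ s) • (Z + Zᵀ) := by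
    rw [hNdef, Matrix.mul_smul, Matrix.mul_smul, ← Matrix.mul_assoc, h2, Matrix.smul_mul,
      Matrix.one_mul, smul_smul, smul_smul]
  have hY4 : (4 : ℤ_[p]) • (S * N) = Y := by
    rw [hY, hSN, smul_smul]
    congr 1
    linear_combination (-(p : ℤ_[p]) ^ (s + 1)) * (p + 2 * u) * hu
  have hNS : Nᵀ * S = S * N := by
    have h3 : (S * N)ᵀ = S * N := by
      rw [hSN]
      simp [add_comm]
    rw [transpose_mul] at h3
    rwa [show Sᵀ = S from hS] at h3
  obtain ⟨W, hW1, ⟨Q, hQ⟩, hW2⟩ := exists_quad_root S N hNS _ hNdef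
  refine ⟨1 + (2 : ℤ_[p]) • W, ?_, ?_⟩
  · have := isUnit_det_one_add (p := p) le_rfl ((2 : ℤ_[p]) • Q)
    rwa [pow_one, smul_comm, ← hQ] at this
  · rw [← hY4, ← hW2, transpose_add, transpose_one, transpose_smul, Matrix.add_mul, Matrix.smul_mul,
      hW1, Matrix.one_mul]
    simp only [Matrix.add_mul, Matrix.mul_add, Matrix.mul_one, Matrix.smul_mul, Matrix.mul_smul,
      smul_add, smul_smul, Matrix.mul_assoc]
    norm_num
    rw [show (4 : ℤ_[p]) = 2 + 2 by norm_num, add_smul, add_smul]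
    abel

end

end KMaux

namespace KMaux

section

variable {p : ℕ} [Fact p.Prime] {m : ℕ}

/-! ### Counting modulo `p^a` -/

/-- Entrywise reduction modulo `p^a`. -/
def red (a : ℕ) (X : Matrix (Fin m) (Fin m) ℤ_[p]) : Matrix (Fin m) (Fin m) (ZMod (p ^ a)) :=
  X.map (PadicInt.toZModPow a)

/-- The number of residue classes modulo `p^a` met by `E`. -/
def cnt (a : ℕ) (E : Set (Matrix (Fin m) (Fin m) ℤ_[p])) : ℕ := (red a '' E).ncard

/-- `E` is a union of residue classes modulo `p^a`. -/
def Sat (a : ℕ) (E : Set (Matrix (Fin m) (Fin m) ℤ_[p])) : Prop :=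
  ∀ X Z, X ∈ E → X + (p : ℤ_[p]) ^ a • Z ∈ E

/-- The solutions over `ℤ_p` of the congruence `S[X] ≡ T mod p^a S_m(ℤ_p)_e`. -/
def Sol (S T : Matrix (Fin m) (Fin m) ℤ_[p]) (a : ℕ) : Set (Matrix (Fin m) (Fin m) ℤ_[p]) :=
  {X | Pe a (Xᵀ * S * X - T)}

instance (a : ℕ) : NeZero (p ^ a) := ⟨pow_ne_zero _ (Fact.out : p.Prime).ne_zero⟩

lemma red_mul (a : ℕ) (X Y : Matrix (Fin m) (Fin m) ℤ_[p]) :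
    red a (X * Y) = red a X * red a Y := Matrix.map_mul

lemma red_one (a : ℕ) : red a (1 : Matrix (Fin m) (Fin m) ℤ_[p]) = 1 :=
  Matrix.map_one _ (map_zero _) (map_one _)

lemma red_surj (a : ℕ) : Function.Surjective (red (p := p) (m := m) a) := by
  intro x
  have hs : Function.Surjective (PadicInt.toZModPow (p := p) a) := ZMod.ringHom_surjective _
  choose g hg using hs
  exact ⟨x.map g, by ext i j; simp [red, hg]⟩

lemma toZModPow_eq_iff (a : ℕ) (x y : ℤ_[p]) :
    PadicInt.toZModPow a x = PadicInt.toZModPow a y ↔ (p : ℤ_[p]) ^ a ∣ x - y := by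
  rw [← sub_eq_zero, ← map_sub, ← RingHom.mem_ker, PadicInt.ker_toZModPow,
    Ideal.mem_span_singleton]

lemma red_eq_iff (a : ℕ) (X Y : Matrix (Fin m) (Fin m) ℤ_[p]) :
    red a X = red a Y ↔ ∃ Z, X = Y + (p : ℤ_[p]) ^ a • Z := by
  constructor
  · intro h
    have : ∀ i j, (p : ℤ_[p]) ^ a ∣ X i j - Y i j := by
      intro i j
      rw [← toZModPow_eq_iff]
      exact congrFun (congrFun h i) j
    choose Z hZ using this
    refine ⟨Matrix.of Z, ?_⟩
    ext i j
    simp [← hZ]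
  · rintro ⟨Z, rfl⟩
    ext i j
    simp only [red, map_apply]
    rw [toZModPow_eq_iff]
    simp

lemma Sat.mem_of_red {a : ℕ} {E : Set (Matrix (Fin m) (Fin m) ℤ_[p])} (h : Sat a E)
    {X Y : Matrix (Fin m) (Fin m) ℤ_[p]} (hY : Y ∈ E) (hXY : red a X = red a Y) : X ∈ E := by
  obtain ⟨Z, rfl⟩ := (red_eq_iff a X Y).1 hXY
  exact h _ _ hY

lemma Sat.red_mem {a : ℕ} {E : Set (Matrix (Fin m) (Fin m) ℤ_[p])} (h : Sat a E)
    {X : Matrix (Fin m) (Fin m) ℤ_[p]} : red a X ∈ red a '' E ↔ X ∈ E := by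
  constructor
  · rintro ⟨Y, hY, e⟩
    exact h.mem_of_red hY e.symm
  · exact fun h => ⟨X, h, rfl⟩

lemma cnt_partition {ι : Type*} [Fintype ι] (a : ℕ) (E : Set (Matrix (Fin m) (Fin m) ℤ_[p]))
    (F : ι → Set (Matrix (Fin m) (Fin m) ℤ_[p])) (hF : ∀ i, Sat a (F i))
    (hE : ∀ X, X ∈ E ↔ ∃ i, X ∈ F i) (hd : ∀ i j X, X ∈ F i → X ∈ F j → i = j) :
    cnt a E = ∑ i, cnt a (F i) := by
  have h1 : (red a '' E).toFinset = Finset.univ.biUnion fun i => (red a '' F i).toFinset := by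
    ext x
    simp only [Set.mem_toFinset, Finset.mem_biUnion, Finset.mem_univ, true_and, Set.mem_image, hE]
    grind
  simp only [cnt, Set.ncard_eq_toFinset_card']
  rw [h1, Finset.card_biUnion]
  intro i _ j _ hij
  rw [Function.onFun, Finset.disjoint_left]
  intro x hx hx'
  simp only [Set.mem_toFinset] at hx hx'
  obtain ⟨X, hX, rfl⟩ := hx
  exact hij (hd i j X hX ((hF j).red_mem.1 hx'))

lemma exists_inv {P : Matrix (Fin m) (Fin m) ℤ_[p]} (hP : IsUnit P.det) :
    ∃ P' : Matrix (Fin m) (Fin m) ℤ_[p], P' * P = 1 ∧ P * P' = 1 ∧ IsUnit P'.det :=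
  ⟨P⁻¹, nonsing_inv_mul _ hP, mul_nonsing_inv _ hP, isUnit_nonsing_inv_det _ hP⟩

lemma cnt_mul_units (a : ℕ) (E : Set (Matrix (Fin m) (Fin m) ℤ_[p]))
    {P Q : Matrix (Fin m) (Fin m) ℤ_[p]} (hP : IsUnit P.det) (hQ : IsUnit Q.det) :
    cnt a {X | P * X * Q ∈ E} = cnt a E := by
  obtain ⟨P', h1, h2, -⟩ := exists_inv hP
  obtain ⟨Q', h3, h4, -⟩ := exists_inv hQ
  have e : red a '' E = (fun x => red a P * x * red a Q) '' (red a '' {X | P * X * Q ∈ E}) := by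
    rw [Set.image_image]
    ext x
    constructor
    · rintro ⟨X, hX, rfl⟩
      have : P * (P' * X * Q') * Q = X := by
        calc P * (P' * X * Q') * Q = (P * P') * X * (Q' * Q) := by simp only [Matrix.mul_assoc]
          _ = X := by rw [h2, h3, Matrix.one_mul, Matrix.mul_one]
      refine ⟨P' * X * Q', by simpa [this] using hX, ?_⟩
      simp only
      rw [← red_mul, ← red_mul, this]
    · rintro ⟨X, hX, rfl⟩
      exact ⟨_, hX, by rw [red_mul, red_mul]⟩
  unfold cnt
  rw [e]
  refine (Set.ncard_image_of_injective _ ?_).symm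
  intro x y hxy
  have : ∀ z, red a P' * (red a P * z * red a Q) * red a Q' = z := by
    intro z
    calc red a P' * (red a P * z * red a Q) * red a Q'
        = (red a P' * red a P) * z * (red a Q * red a Q') := by simp only [Matrix.mul_assoc]
      _ = z := by rw [← red_mul, ← red_mul, h1, h4, red_one, Matrix.one_mul, Matrix.mul_one]
  rw [← this x, ← this y]
  simp only at hxy
  rw [hxy]

lemma sat_sol {S T : Matrix (Fin m) (Fin m) ℤ_[p]} (hS : S.IsSymm) {a : ℕ} (ha : 1 ≤ a) :
    Sat a (Sol S T a) := by
  intro X Z hX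
  have := Pe.add (pe_perturb ha hS X Z) hX
  simpa [Sol] using this

lemma pe_conj_iff {V : Matrix (Fin m) (Fin m) ℤ_[p]} (hV : IsUnit V.det) {a : ℕ}
    {B : Matrix (Fin m) (Fin m) ℤ_[p]} : Pe a (Vᵀ * B * V) ↔ Pe a B := by
  refine ⟨fun h => ?_, fun h => h.conj V⟩
  obtain ⟨V', h1, h2, -⟩ := exists_inv hV
  have h3 := h.conj V'
  have : V'ᵀ * (Vᵀ * B * V) * V' = (V * V')ᵀ * B * (V * V') := by
    simp only [transpose_mul, Matrix.mul_assoc]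
  rwa [this, h2, transpose_one, Matrix.one_mul, Matrix.mul_one] at h3

lemma cnt_sol_conj (S T : Matrix (Fin m) (Fin m) ℤ_[p]) {V : Matrix (Fin m) (Fin m) ℤ_[p]}
    (hV : IsUnit V.det) (a : ℕ) : cnt a (Sol S (Vᵀ * T * V) a) = cnt a (Sol S T a) := by
  rw [← cnt_mul_units a (Sol S (Vᵀ * T * V) a) (P := 1) (by simp) hV]
  congr 1
  ext X
  simp only [Sol, Set.mem_ofPred_eq, Matrix.one_mul]
  rw [← pe_conj_iff hV (B := Xᵀ * S * X - T)]
  simp only [transpose_mul, Matrix.mul_sub, Matrix.sub_mul, Matrix.mul_assoc]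

lemma cnt_sol_conj_left (S : Matrix (Fin m) (Fin m) ℤ_[p]) {V : Matrix (Fin m) (Fin m) ℤ_[p]}
    (hV : IsUnit V.det) (a : ℕ) :
    cnt a (Sol (Vᵀ * S * V) (Vᵀ * S * V) a) = cnt a (Sol S S a) := by
  rw [cnt_sol_conj _ _ hV, ← cnt_mul_units a (Sol S S a) hV (Q := 1) (by simp)]
  congr 1
  ext X
  simp only [Sol, Set.mem_ofPred_eq, Matrix.mul_one, transpose_mul, Matrix.mul_assoc]

/-- The fibres of a homomorphism from a finite group over its range all have the size of the
kernel. -/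
lemma ncard_preimage {G H : Type*} [AddCommGroup G] [AddCommGroup H] [Finite G]
    (φ : G →+ H) (s : Set H) (hs : s ⊆ Set.range φ) :
    (φ ⁻¹' s).ncard = Nat.card φ.ker * s.ncard := by
  have hsf : s.Finite := (Set.finite_range φ).subset hs
  have hs' : ∀ y, ∃ x, y ∈ s → φ x = y := fun y => by
    by_cases hy : y ∈ s
    · obtain ⟨x, hx⟩ := hs hy
      exact ⟨x, fun _ => hx⟩
    · exact ⟨0, fun h => absurd h hy⟩
  choose g hg using hs'
  rw [← Nat.card_coe_set_eq, ← Nat.card_coe_set_eq, ← Nat.card_prod]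
  refine Nat.card_congr
    { toFun := fun x => (⟨x.1 - g (φ x.1), ?_⟩, ⟨φ x.1, x.2⟩)
      invFun := fun y => ⟨y.1.1 + g y.2.1, ?_⟩
      left_inv := ?_
      right_inv := ?_ }
  · rw [AddMonoidHom.mem_ker, map_sub, hg _ x.2, sub_self]
  · have h1 : φ y.1.1 = 0 := y.1.2
    simp [h1, hg _ y.2.2]
  · rintro ⟨x, hx⟩
    simp
  · rintro ⟨⟨x, hx⟩, ⟨y, hy⟩⟩
    have h1 : φ x = 0 := hx
    simp [h1, hg _ hy]

lemma card_mat (a : ℕ) : Nat.card (Matrix (Fin m) (Fin m) (ZMod (p ^ a))) = p ^ (a * (m * m)) := by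
  change Nat.card (Fin m → Fin m → ZMod (p ^ a)) = _
  simp [← pow_mul, mul_assoc]

/-- A residue class modulo `p^a` splits into `p^{m²}` classes modulo `p^{a+1}`. -/
lemma cnt_succ (a : ℕ) {E : Set (Matrix (Fin m) (Fin m) ℤ_[p])} (hE : Sat a E) :
    cnt (a + 1) E = p ^ (m * m) * cnt a E := by
  let f : ZMod (p ^ (a + 1)) →+* ZMod (p ^ a) := ZMod.castHom (pow_dvd_pow p (Nat.le_succ a)) _
  let φ : Matrix (Fin m) (Fin m) (ZMod (p ^ (a + 1))) →+ Matrix (Fin m) (Fin m) (ZMod (p ^ a)) :=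
    f.toAddMonoidHom.mapMatrix
  have hφ : ∀ X, φ (red (a + 1) X) = red a X := by
    intro X
    ext i j
    exact PadicInt.cast_toZModPow a (a + 1) (Nat.le_succ a) _
  have hsurj : Function.Surjective φ := by
    intro x
    obtain ⟨X, rfl⟩ := red_surj a x
    exact ⟨_, hφ X⟩
  have hpre : φ ⁻¹' (red a '' E) = red (a + 1) '' E := by
    ext x
    obtain ⟨X, rfl⟩ := red_surj (a + 1) x
    rw [Set.mem_preimage, hφ, hE.red_mem]
    constructor
    · exact fun h => ⟨X, h, rfl⟩
    · rintro ⟨Y, hY, e⟩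
      exact hE.mem_of_red hY (by rw [← hφ X, ← hφ Y, e])
  unfold cnt
  rw [← hpre, ncard_preimage _ _ (by rw [hsurj.range_eq]; exact Set.subset_univ _)]
  congr 1
  have h1 := ncard_preimage φ Set.univ (by rw [hsurj.range_eq])
  rw [Set.preimage_univ, Set.ncard_univ, Set.ncard_univ, card_mat, card_mat, add_mul, pow_add,
    mul_comm, one_mul] at h1
  exact (Nat.eq_of_mul_eq_mul_right (pow_pos (Fact.out : p.Prime).pos _) h1).symm

lemma card_ker_pow {a e : ℕ} (h : e ≤ a) :
    Nat.card {z : ZMod (p ^ a) // z * (p : ZMod (p ^ a)) ^ e = 0} = p ^ e := by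
  let f : ZMod (p ^ a) →+* ZMod (p ^ (a - e)) := ZMod.castHom (pow_dvd_pow p (Nat.sub_le a e)) _
  have hs : Function.Surjective f := ZMod.ringHom_surjective _
  have hk : ∀ z, z ∈ f.toAddMonoidHom.ker ↔ z * (p : ZMod (p ^ a)) ^ e = 0 := by
    intro z
    obtain ⟨n, rfl⟩ := ZMod.natCast_zmod_surjective z
    rw [AddMonoidHom.mem_ker]
    change f n = 0 ↔ _
    rw [map_natCast, ← Nat.cast_pow, ← Nat.cast_mul, ZMod.natCast_eq_zero_iff,
      ZMod.natCast_eq_zero_iff]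
    conv_rhs => rw [← Nat.sub_add_cancel h, pow_add]
    rw [Nat.mul_dvd_mul_iff_right (pow_pos (Fact.out : p.Prime).pos _)]
  rw [← Nat.card_congr (Equiv.subtypeEquivRight hk)]
  have h1 := ncard_preimage f.toAddMonoidHom Set.univ (by
    intro x _; exact hs x)
  rw [Set.preimage_univ, Set.ncard_univ, Set.ncard_univ, Nat.card_zmod, Nat.card_zmod] at h1
  have h2 : p ^ a = p ^ e * p ^ (a - e) := by rw [← pow_add, Nat.add_sub_cancel' h]
  exact Nat.eq_of_mul_eq_mul_right (pow_pos (Fact.out : p.Prime).pos _) (h1.symm.trans h2)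

/-- Right multiplication by `D = diag(p^{e_j})` is `p^{m ∑ e_j}`-to-one modulo `p^a`. -/
lemma cnt_mul_diag (a : ℕ) (e : Fin m → ℕ) (he : ∀ i, e i ≤ a)
    {E : Set (Matrix (Fin m) (Fin m) ℤ_[p])} (hE : Sat a E) :
    cnt a {U | U * diagonal (fun j => (p : ℤ_[p]) ^ e j) ∈ E} =
      p ^ (m * ∑ i, e i) *
        cnt a ((fun U => U * diagonal (fun j => (p : ℤ_[p]) ^ e j)) ''
          {U | U * diagonal (fun j => (p : ℤ_[p]) ^ e j) ∈ E}) := by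
  set D : Matrix (Fin m) (Fin m) ℤ_[p] := diagonal (fun j => (p : ℤ_[p]) ^ e j) with hD
  have hrD : red a D = diagonal (fun j => (p : ZMod (p ^ a)) ^ e j) := by
    simp only [red, hD]
    rw [diagonal_map (map_zero _)]
    simp
  let φ : Matrix (Fin m) (Fin m) (ZMod (p ^ a)) →+ Matrix (Fin m) (Fin m) (ZMod (p ^ a)) :=
    AddMonoidHom.mulRight (red a D)
  have hφ : ∀ x, φ x = x * red a D := fun x => rfl
  have hker : Nat.card φ.ker = p ^ (m * ∑ i, e i) := by
    have h1 : Nat.card φ.ker = Nat.card (∀ i j : Fin m,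
        {z : ZMod (p ^ a) // z * (p : ZMod (p ^ a)) ^ e j = 0}) := by
      refine Nat.card_congr
        { toFun := fun x i j => ⟨x.1 i j, ?_⟩
          invFun := fun y => ⟨Matrix.of fun i j => (y i j).1, ?_⟩
          left_inv := fun x => rfl
          right_inv := fun x => rfl }
      · have h2 : x.1 * red a D = 0 := x.2
        have h3 := congrFun (congrFun h2 i) j
        rwa [hrD, mul_diagonal] at h3
      · change _ * red a D = 0
        rw [hrD]
        ext i j
        rw [mul_diagonal]
        exact (y i j).2
    rw [h1, Nat.card_pi]
    simp_rw [Nat.card_pi, card_ker_pow (he _)]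
    rw [Finset.prod_const, Finset.prod_pow_eq_pow_sum]
    simp [← pow_mul, mul_comm]
  unfold cnt
  rw [← hker, ← ncard_preimage]
  · congr 1
    ext x
    obtain ⟨X, rfl⟩ := red_surj a x
    rw [Set.mem_preimage, hφ, ← red_mul]
    constructor
    · rintro ⟨Y, hY, h⟩
      refine ⟨_, ⟨Y, hY, rfl⟩, ?_⟩
      simp only [red_mul, h]
    · rintro ⟨_, ⟨Y, hY, rfl⟩, h⟩
      refine ⟨X, ?_, rfl⟩
      exact hE.mem_of_red hY h.symm
  · rintro _ ⟨_, ⟨Y, hY, rfl⟩, rfl⟩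
    exact ⟨red a Y, by rw [hφ, red_mul]⟩

end

end KMaux

namespace KMaux

section

variable {p : ℕ} [Fact p.Prime] {m : ℕ}

/-! ### Counting over a lattice of right-hand sides -/

lemma eps_ne_zero (i j : Fin m) : (if i = j then (2 : ℤ_[p]) else 1) ≠ 0 := by
  split_ifs <;> norm_num

/-- If every even symmetric perturbation of `S` in `p^c S_m(ℤ_p)_e` is integrally equivalent to `S`,
then all congruences `S[U] ≡ S + Y mod p^a S_m(ℤ_p)_e` with `Y ∈ p^c S_m(ℤ_p)_e` have equally many
solutions. So the number of `U` for which `S[U] - S` lies in the lattice cut out by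
`p^{a - k_{ij}} ∣ y_{ij}` (with even diagonal) is the index of `p^a S_m(ℤ_p)_e` in it times the
number of solutions of `S[U] ≡ S`. -/
lemma cnt_lattice {S : Matrix (Fin m) (Fin m) ℤ_[p]} (hS : S.IsSymm) {c : ℕ}
    (hc : ∀ Y, Pe c Y → ∃ V : Matrix (Fin m) (Fin m) ℤ_[p],
      IsUnit V.det ∧ Vᵀ * S * V = S + Y)
    (k : Fin m → Fin m → ℕ) (hk : ∀ i j, k i j = k j i) {a : ℕ} (ha : 1 ≤ a)
    (hka : ∀ i j, c + k i j ≤ a) :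
    cnt a {U : Matrix (Fin m) (Fin m) ℤ_[p] | ∀ i j,
        (p : ℤ_[p]) ^ (a - k i j) * (if i = j then 2 else 1) ∣ (Uᵀ * S * U - S) i j} =
      p ^ (∑ x : {x : Fin m × Fin m // x.1 ≤ x.2}, k x.1.1 x.1.2) * cnt a (Sol S S a) := by
  let Y : (∀ x : {x : Fin m × Fin m // x.1 ≤ x.2}, ZMod (p ^ k x.1.1 x.1.2)) →
      Matrix (Fin m) (Fin m) ℤ_[p] := fun q => Matrix.of fun i j =>
    (p : ℤ_[p]) ^ (a - k i j) * (if i = j then 2 else 1) *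
      ((q ⟨(min i j, max i j), min_le_max⟩).val : ℤ_[p])
  have hYs : ∀ q, (Y q).IsSymm := by
    intro q
    ext i j
    simp only [Y, transpose_apply, of_apply, hk i j, eq_comm (a := i) (b := j)]
    congr 1
    exact congrArg (fun x => ((q x).val : ℤ_[p])) (Subtype.ext (Prod.ext (min_comm j i)
      (max_comm j i)))
  have hYe : ∀ q i j (h : i ≤ j), Y q i j = (p : ℤ_[p]) ^ (a - k i j) * (if i = j then 2 else 1) *
      ((q ⟨(i, j), h⟩).val : ℤ_[p]) := by
    intro q i j h
    simp only [Y, of_apply]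
    congr 1
    exact congrArg (fun x => ((q x).val : ℤ_[p])) (Subtype.ext (Prod.ext (min_eq_left h)
      (max_eq_right h)))
  have hYd : ∀ q i j, (p : ℤ_[p]) ^ (a - k i j) * (if i = j then 2 else 1) ∣ Y q i j :=
    fun q i j => Dvd.intro _ rfl
  clear_value Y
  have hYP : ∀ q, Pe c (Y q) := by
    intro q
    rw [pe_iff (hYs q)]
    intro i j
    exact (mul_dvd_mul_right (pow_dvd_pow _ (by have := hka i j; omega)) _).trans (hYd q i j)
  have hpow : ∀ i j, (p : ℤ_[p]) ^ a = (p : ℤ_[p]) ^ (a - k i j) * (p : ℤ_[p]) ^ k i j := by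
    intro i j
    rw [← pow_add, Nat.sub_add_cancel (by have := hka i j; omega)]
  have hBs : ∀ X : Matrix (Fin m) (Fin m) ℤ_[p], (Xᵀ * S * X - S).IsSymm := by
    intro X
    have hS' : Sᵀ = S := hS
    simp [Matrix.IsSymm, Matrix.mul_assoc, hS']
  rw [cnt_partition a _ (fun q => Sol S (S + Y q) a) (fun q => sat_sol hS ha)]
  · have : ∀ q, cnt a (Sol S (S + Y q) a) = cnt a (Sol S S a) := by
      intro q
      obtain ⟨V, hV, e⟩ := hc _ (hYP q)
      rw [← e, cnt_sol_conj _ _ hV]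
    simp only [this]
    rw [Finset.sum_const, smul_eq_mul]
    congr 1
    rw [Finset.card_univ, Fintype.card_pi]
    simp only [ZMod.card]
    rw [Finset.prod_pow_eq_pow_sum]
  · intro X
    simp only [Sol, Set.mem_ofPred_eq, ← sub_sub]
    constructor
    · intro h
      choose z hz using h
      obtain ⟨q, hq⟩ : ∃ q : ∀ x : {x : Fin m × Fin m // x.1 ≤ x.2}, ZMod (p ^ k x.1.1 x.1.2),
          ∀ x, q x = PadicInt.toZModPow _ (z x.1.1 x.1.2) := ⟨fun x => _, fun x => rfl⟩
      refine ⟨q, ?_⟩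
      have hsy : (Xᵀ * S * X - S - Y q).IsSymm := (hBs X).sub (hYs q)
      rw [pe_iff hsy]
      have main : ∀ i j, i ≤ j → (p : ℤ_[p]) ^ a * (if i = j then 2 else 1) ∣
          (Xᵀ * S * X - S - Y q) i j := by
        intro i j hij
        rw [Matrix.sub_apply, hYe _ _ _ hij, hz, ← mul_sub, hpow i j, mul_right_comm]
        apply mul_dvd_mul_left
        rw [← toZModPow_eq_iff, map_natCast, ZMod.natCast_zmod_val, hq]
      intro i j
      rcases le_total i j with h | h
      · exact main i j h
      · rw [← hsy.apply]
        simp only [eq_comm (a := i) (b := j)]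
        exact main j i h
    · rintro ⟨q, hq⟩ i j
      have h1 := (pe_iff hq.symm).1 hq i j
      have h3 := dvd_add
        ((mul_dvd_mul_right (pow_dvd_pow (p : ℤ_[p]) (Nat.sub_le a (k i j))) _).trans h1) (hYd q i j)
      rwa [Matrix.sub_apply, sub_add_cancel] at h3
  · intro q q' X h h'
    simp only [Sol, Set.mem_ofPred_eq, ← sub_sub] at h h'
    have h1 : Pe a (Y q - Y q') := by
      have := h'.add h.neg
      rwa [show (Xᵀ * S * X - S - Y q') + -(Xᵀ * S * X - S - Y q) = Y q - Y q' by abel] at this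
    ext1 ⟨⟨i, j⟩, hij⟩
    have h2 := (pe_iff h1.symm).1 h1 i j
    rw [Matrix.sub_apply, hYe _ _ _ hij, hYe _ _ _ hij, ← mul_sub, hpow i j, mul_right_comm,
      mul_dvd_mul_iff_left (mul_ne_zero (pow_ne_zero _ p_ne_zero) (eps_ne_zero i j)),
      ← toZModPow_eq_iff, map_natCast, map_natCast, ZMod.natCast_zmod_val,
      ZMod.natCast_zmod_val] at h2
    exact h2

/-- In `∑_{i ≤ j} (e_i + e_j)` each `e_i` occurs `m + 1` times. -/
lemma sum_le_pairs (e : Fin m → ℕ) :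
    ∑ x : {x : Fin m × Fin m // x.1 ≤ x.2}, (e x.1.1 + e x.1.2) = (m + 1) * ∑ i, e i := by
  have h1 : ∑ x : {x : Fin m × Fin m // x.1 ≤ x.2}, (e x.1.1 + e x.1.2)
      = ∑ i, ∑ j, if i ≤ j then (e i + e j) else 0 := by
    rw [← Fintype.sum_prod_type' (f := fun i j => if i ≤ j then (e i + e j) else 0),
      ← Finset.sum_filter]
    exact (Finset.sum_subtype (p := fun x : Fin m × Fin m => x.1 ≤ x.2) _ (by simp)
      (fun x => e x.1 + e x.2)).symm
  have h2 : ∑ i, ∑ j, (if i ≤ j then e j else 0) = ∑ i, ∑ j, (if j ≤ i then e i else 0) :=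
    Finset.sum_comm
  have h3 : ∀ i j : Fin m, (if i ≤ j then (e i + e j) else 0)
      = (if i ≤ j then e i else 0) + (if i ≤ j then e j else 0) := by
    intro i j; split_ifs <;> rfl
  have h4 : ∀ i j : Fin m, (if i ≤ j then e i else 0) + (if j ≤ i then e i else 0)
      = e i + if i = j then e i else 0 := by
    intro i j
    rcases lt_trichotomy i j with h | h | h
    · simp [h.le, h.ne, not_le.2 h]
    · simp [h]
    · simp [h.le, h.ne', not_le.2 h]
  rw [h1]
  simp only [h3, Finset.sum_add_distrib]
  rw [h2]
  simp only [← Finset.sum_add_distrib, h4]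
  simp only [Finset.sum_add_distrib]
  simp [← Finset.mul_sum]
  ring

/-! ### Smith normal form -/

lemma smith {X : Matrix (Fin m) (Fin m) ℤ_[p]} (hX : X.det ≠ 0) :
    ∃ (P Q : Matrix (Fin m) (Fin m) ℤ_[p]) (e : Fin m → ℕ), IsUnit P.det ∧ IsUnit Q.det ∧
      X = P * diagonal (fun j => (p : ℤ_[p]) ^ e j) * Q ∧ ∑ i, e i = X.det.valuation := by
  let f := X.mulVecLin
  have hf : Function.Injective f := Matrix.mulVec_injective_of_det_ne_zero hX
  let b := Pi.basisFun ℤ_[p] (Fin m)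
  obtain ⟨b', a, ab', h⟩ := Submodule.exists_smith_normal_form_of_rank_eq (N := LinearMap.range f) b
    (LinearMap.finrank_range_of_inj hf)
  let bN := b.map (LinearEquiv.ofInjective f hf)
  have ha : ∀ i, a i ≠ 0 := by
    intro i hi
    apply ab'.ne_zero i
    refine Subtype.coe_injective ?_
    simp [h, hi]
  have hPu : IsUnit (b.toMatrix b').det :=
    Matrix.isUnit_det_of_right_inverse (b.toMatrix_mul_toMatrix_flip b')
  have hQu : IsUnit (ab'.toMatrix bN).det :=
    Matrix.isUnit_det_of_right_inverse (ab'.toMatrix_mul_toMatrix_flip bN)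
  have hXe : X = b.toMatrix b' * diagonal a * ab'.toMatrix bN := by
    ext r j
    have h1 : ((bN j : LinearMap.range f) : Fin m → ℤ_[p]) r = X r j := by
      simp [bN, b, f]
    have h2 := ab'.sum_repr (bN j)
    have h3 := congrArg (fun v : LinearMap.range f => (v : Fin m → ℤ_[p]) r) h2
    simp only [h1] at h3
    rw [← h3]
    simp [-Module.Basis.sum_repr, Matrix.mul_apply, h, Module.Basis.toMatrix_apply, b,
      diagonal_apply, mul_comm]
  let D' : Matrix (Fin m) (Fin m) ℤ_[p] := diagonal fun i => (PadicInt.unitCoeff (ha i) : ℤ_[p])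
  have hD' : IsUnit D'.det := by
    rw [det_diagonal, IsUnit.prod_iff]
    exact fun i _ => Units.isUnit _
  have hda : diagonal a = diagonal (fun j => (p : ℤ_[p]) ^ (a j).valuation) * D' := by
    rw [diagonal_mul_diagonal]
    congr 1
    ext1 i
    rw [mul_comm]
    exact PadicInt.unitCoeff_spec (ha i)
  have hQ' : IsUnit (D' * ab'.toMatrix bN).det := by
    rw [det_mul]; exact hD'.mul hQu
  have hX' : X = b.toMatrix b' * diagonal (fun j => (p : ℤ_[p]) ^ (a j).valuation) *
      (D' * ab'.toMatrix bN) := by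
    conv_lhs => rw [hXe, hda]
    simp only [Matrix.mul_assoc]
  refine ⟨_, _, fun j => (a j).valuation, hPu, hQ', hX', ?_⟩
  obtain ⟨u, hu⟩ := hPu
  obtain ⟨v, hv⟩ := hQ'
  have hdet : X.det = (p : ℤ_[p]) ^ (∑ i, (a i).valuation) * ((u * v : ℤ_[p]ˣ) : ℤ_[p]) := by
    conv_lhs => rw [hX', det_mul, det_mul, det_diagonal, ← hu, ← hv]
    rw [Finset.prod_pow_eq_pow_sum, Units.val_mul]
    ring
  rw [hdet, PadicInt.valuation_p_pow_mul _ _ (Units.ne_zero _)]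
  have : ((u * v : ℤ_[p]ˣ) : ℤ_[p]).valuation = 0 := by
    have h1 : ‖((u * v : ℤ_[p]ˣ) : ℤ_[p])‖ = 1 := PadicInt.norm_units _
    rw [PadicInt.norm_eq_zpow_neg_valuation (Units.ne_zero _)] at h1
    have hp : (1 : ℝ) < p := by exact_mod_cast (Fact.out : p.Prime).one_lt
    have := (zpow_eq_one_iff_right₀ (by positivity) hp.ne').1 h1
    omega
  rw [this, add_zero]

end

end KMaux

namespace KMaux

section

variable {p : ℕ} [Fact p.Prime] {m : ℕ}

/-! ### Left cosets inside the solution set -/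

/-- The left coset `GL_m(ℤ_p) X`. -/
def Cos (X : Matrix (Fin m) (Fin m) ℤ_[p]) : Set (Matrix (Fin m) (Fin m) ℤ_[p]) :=
  {Y | ∃ U : Matrix (Fin m) (Fin m) ℤ_[p], IsUnit U.det ∧ Y = U * X}

lemma isUnit_iff_val {x : ℤ_[p]} (hx : x ≠ 0) : IsUnit x ↔ x.valuation = 0 := by
  have hp : (1 : ℝ) < p := by exact_mod_cast (Fact.out : p.Prime).one_lt
  rw [PadicInt.isUnit_iff, PadicInt.norm_eq_zpow_neg_valuation hx,
    zpow_eq_one_iff_right₀ (by positivity) hp.ne']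
  omega

/-- Taking determinants in `S[X] ≡ T mod p^a` with `a > ν(det T)`. -/
lemma sol_val {S T X : Matrix (Fin m) (Fin m) ℤ_[p]} {a : ℕ} (hS : S.det ≠ 0) (hT : T.det ≠ 0)
    (ha : T.det.valuation < a) (hX : X ∈ Sol S T a) :
    X.det ≠ 0 ∧ 2 * X.det.valuation + S.det.valuation = T.det.valuation := by
  obtain ⟨Z, hZ⟩ := hX
  have h1 := dvd_det_sub (sub_eq_iff_eq_add'.1 hZ)
  obtain ⟨h2, h3⟩ := val_eq_of_dvd hT ha h1
  rw [det_mul, det_mul, det_transpose] at h2 h3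
  have hX0 : X.det ≠ 0 := fun h => h2 (by simp [h])
  refine ⟨hX0, ?_⟩
  rw [PadicInt.valuation_mul (mul_ne_zero hX0 hS) hX0, PadicInt.valuation_mul hX0 hS] at h3
  omega

lemma mem_sol_of_eq {S T X : Matrix (Fin m) (Fin m) ℤ_[p]} (h : Xᵀ * S * X = T) (a : ℕ) :
    X ∈ Sol S T a := ⟨0, by simp [h]⟩

lemma eq_val {S T X : Matrix (Fin m) (Fin m) ℤ_[p]} (hS : S.det ≠ 0) (hT : T.det ≠ 0)
    (h : Xᵀ * S * X = T) :
    X.det ≠ 0 ∧ 2 * X.det.valuation + S.det.valuation = T.det.valuation :=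
  sol_val hS hT (Nat.lt_succ_self _) (mem_sol_of_eq h _)

lemma mem_cos_self (X : Matrix (Fin m) (Fin m) ℤ_[p]) : X ∈ Cos X := ⟨1, by simp, by simp⟩

lemma cos_eq {X Y : Matrix (Fin m) (Fin m) ℤ_[p]} (h : Y ∈ Cos X) : Cos Y = Cos X := by
  obtain ⟨U, hU, rfl⟩ := h
  obtain ⟨U', h1, h2, hU'⟩ := exists_inv hU
  ext Z
  constructor
  · rintro ⟨V, hV, rfl⟩
    exact ⟨V * U, by rw [det_mul]; exact hV.mul hU, by rw [Matrix.mul_assoc]⟩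
  · rintro ⟨V, hV, rfl⟩
    refine ⟨V * U', by rw [det_mul]; exact hV.mul hU', ?_⟩
    rw [Matrix.mul_assoc, ← Matrix.mul_assoc U', h1, Matrix.one_mul]

/-- If `ν(det X) < a` then `X + p^a Z = (1 + p^{a-d} Z X') X`, where `X' X = p^d` and
`d = ν(det X)`. -/
lemma sat_cos {X : Matrix (Fin m) (Fin m) ℤ_[p]} {a : ℕ} (hX : X.det ≠ 0)
    (ha : X.det.valuation < a) : Sat a (Cos X) := by
  rintro _ Z ⟨U, hU, rfl⟩
  have hUv : (U * X).det.valuation = X.det.valuation := by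
    rw [det_mul, PadicInt.valuation_mul hU.ne_zero hX, (isUnit_iff_val hU.ne_zero).1 hU, zero_add]
  have hUX : (U * X).det ≠ 0 := by rw [det_mul]; exact mul_ne_zero hU.ne_zero hX
  rw [← cos_eq (⟨U, hU, rfl⟩ : U * X ∈ Cos X)]
  obtain ⟨X', h1, -⟩ := exists_quasi_inv hUX
  rw [hUv] at h1
  refine ⟨1 + (p : ℤ_[p]) ^ (a - X.det.valuation) • (Z * X'), isUnit_det_one_add (by omega) _, ?_⟩
  rw [Matrix.add_mul, Matrix.one_mul, Matrix.smul_mul, Matrix.mul_assoc Z, h1, Matrix.mul_smul,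
    smul_smul, ← pow_add, Nat.sub_add_cancel ha.le, Matrix.mul_one]

/-- The solutions of `S[X] ≡ S[D]` in the coset of a diagonal `D` are the products `U D`, where
`S[U] - S` runs through a lattice of index `p^{(m+1)d}` over `p^a S_m(ℤ_p)_e`, and right
multiplication by `D` is `p^{md}`-to-one modulo `p^a`. -/
lemma cnt_coset_diag {S : Matrix (Fin m) (Fin m) ℤ_[p]} (hS : S.IsSymm) (hd : S.det ≠ 0)
    (e : Fin m → ℕ) :
    ∀ᶠ a in atTop,
      cnt a (Sol S ((diagonal fun j => (p : ℤ_[p]) ^ e j)ᵀ * S *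
          diagonal fun j => (p : ℤ_[p]) ^ e j) a ∩
        Cos (diagonal fun j => (p : ℤ_[p]) ^ e j)) = p ^ (∑ i, e i) * cnt a (Sol S S a) := by
  obtain ⟨c, hc⟩ := hensel hS hd
  set D : Matrix (Fin m) (Fin m) ℤ_[p] := diagonal fun j => (p : ℤ_[p]) ^ e j with hD
  have hDd : D.det ≠ 0 := by
    rw [hD, det_diagonal]
    exact Finset.prod_ne_zero_iff.2 fun i _ => pow_ne_zero _ p_ne_zero
  have hTd : (Dᵀ * S * D).det ≠ 0 := by
    rw [det_mul, det_mul, det_transpose]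
    exact mul_ne_zero (mul_ne_zero hDd hd) hDd
  have hTv := (eq_val (S := S) hd hTd rfl).2
  have hele : ∀ i, e i ≤ ∑ i, e i := fun i => Finset.single_le_sum (fun _ _ => Nat.zero_le _)
    (Finset.mem_univ i)
  filter_upwards [eventually_ge_atTop ((Dᵀ * S * D).det.valuation + 1 + c + 2 * ∑ i, e i)] with a ha
  have hS' : Sᵀ = S := hS
  have hDt : Dᵀ = D := by rw [hD, diagonal_transpose]
  have hset : {U : Matrix (Fin m) (Fin m) ℤ_[p] | U * D ∈ Sol S (Dᵀ * S * D) a} =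
      {U : Matrix (Fin m) (Fin m) ℤ_[p] | ∀ i j,
        (p : ℤ_[p]) ^ (a - (e i + e j)) * (if i = j then 2 else 1) ∣ (Uᵀ * S * U - S) i j} := by
    ext U
    simp only [Sol, Set.mem_ofPred_eq]
    have e1 : (U * D)ᵀ * S * (U * D) - Dᵀ * S * D = D * (Uᵀ * S * U - S) * D := by
      rw [transpose_mul, hDt]
      simp only [Matrix.mul_sub, Matrix.sub_mul, Matrix.mul_assoc]
    have hsy : (D * (Uᵀ * S * U - S) * D).IsSymm := by
      simp [Matrix.IsSymm, Matrix.mul_assoc, hS', hDt]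
    rw [e1, pe_iff hsy]
    refine forall_congr' fun i => forall_congr' fun j => ?_
    have e2 : (D * (Uᵀ * S * U - S) * D) i j
        = (p : ℤ_[p]) ^ (e i + e j) * (Uᵀ * S * U - S) i j := by
      rw [hD, mul_diagonal, diagonal_mul, pow_add]; ring
    have e3 : (p : ℤ_[p]) ^ a = (p : ℤ_[p]) ^ (e i + e j) * (p : ℤ_[p]) ^ (a - (e i + e j)) := by
      rw [← pow_add]; congr 1
      have := hele i; have := hele j; omega
    rw [e2, e3, mul_assoc, mul_dvd_mul_iff_left (pow_ne_zero _ p_ne_zero)]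
  have himg : Sol S (Dᵀ * S * D) a ∩ Cos D =
      (fun U => U * D) '' {U : Matrix (Fin m) (Fin m) ℤ_[p] | U * D ∈ Sol S (Dᵀ * S * D) a} := by
    ext X
    constructor
    · rintro ⟨h, U, hU, rfl⟩
      exact ⟨U, h, rfl⟩
    · rintro ⟨U, hU, rfl⟩
      refine ⟨hU, U, ?_, rfl⟩
      obtain ⟨h1, h2⟩ := sol_val hd hTd (by omega) hU
      rw [det_mul] at h1 h2
      have hU0 := left_ne_zero_of_mul h1
      rw [PadicInt.valuation_mul hU0 hDd] at h2
      rw [isUnit_iff_val hU0]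
      omega
  have k1 := cnt_lattice hS hc (fun i j => e i + e j) (fun i j => add_comm _ _) (a := a) (by omega)
    (fun i j => by have := hele i; have := hele j; omega)
  have k2 := cnt_mul_diag a e (fun i => by have := hele i; omega)
    (sat_sol (T := Dᵀ * S * D) hS (a := a) (by omega))
  rw [← hD, ← himg, hset, k1, sum_le_pairs, add_mul, one_mul, pow_add, mul_assoc] at k2
  exact (Nat.eq_of_mul_eq_mul_left (pow_pos (Fact.out : p.Prime).pos _) k2).symm

/-- Every coset of exact solutions contributes `p^d` times the number of solutions of `S[U] ≡ S`,
where `d = ν(det X)`; this reduces to diagonal `X` by the Smith normal form. -/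
lemma cnt_coset {S X : Matrix (Fin m) (Fin m) ℤ_[p]} (hS : S.IsSymm) (hd : S.det ≠ 0)
    (hX : X.det ≠ 0) :
    ∀ᶠ a in atTop,
      cnt a (Sol S (Xᵀ * S * X) a ∩ Cos X) = p ^ X.det.valuation * cnt a (Sol S S a) := by
  obtain ⟨P, Q, e, hP, hQ, hXe, hev⟩ := smith hX
  have hS' : (Pᵀ * S * P).IsSymm := by
    have : Sᵀ = S := hS
    simp [Matrix.IsSymm, Matrix.mul_assoc, this]
  have hd' : (Pᵀ * S * P).det ≠ 0 := by
    rw [det_mul, det_mul, det_transpose]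
    exact mul_ne_zero (mul_ne_zero hP.ne_zero hd) hP.ne_zero
  filter_upwards [cnt_coset_diag hS' hd' e] with a ha
  rw [cnt_sol_conj_left S hP, hev] at ha
  rw [← ha, ← cnt_mul_units a _ hP hQ]
  congr 1
  set D : Matrix (Fin m) (Fin m) ℤ_[p] := diagonal fun j => (p : ℤ_[p]) ^ e j with hD
  clear_value D
  obtain ⟨P', hP1, hP2, hPu⟩ := exists_inv hP
  obtain ⟨Q', hQ1, hQ2, hQu⟩ := exists_inv hQ
  ext Y
  subst hXe
  refine and_congr ?_ ?_
  · have e1 : (P * Y * Q)ᵀ * S * (P * Y * Q) - (P * D * Q)ᵀ * S * (P * D * Q)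
        = Qᵀ * (Yᵀ * (Pᵀ * S * P) * Y - Dᵀ * (Pᵀ * S * P) * D) * Q := by
      simp only [transpose_mul, Matrix.mul_sub, Matrix.sub_mul, Matrix.mul_assoc]
    simp only [Sol, Set.mem_ofPred_eq]
    rw [e1, pe_conj_iff hQ]
  · constructor
    · rintro ⟨U, hU, h⟩
      refine ⟨P' * U * P, by rw [det_mul, det_mul]; exact (hPu.mul hU).mul hP, ?_⟩
      calc Y = (P' * P) * Y * (Q * Q') := by rw [hP1, hQ2, Matrix.one_mul, Matrix.mul_one]
        _ = P' * (P * Y * Q) * Q' := by simp only [Matrix.mul_assoc]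
        _ = P' * U * P * D * (Q * Q') := by rw [h]; simp only [Matrix.mul_assoc]
        _ = P' * U * P * D := by rw [hQ2, Matrix.mul_one]
    · rintro ⟨U, hU, rfl⟩
      refine ⟨P * U * P', by rw [det_mul, det_mul]; exact (hP.mul hU).mul hPu, ?_⟩
      calc P * (U * D) * Q = P * U * 1 * D * Q := by rw [Matrix.mul_one]; simp only [Matrix.mul_assoc]
        _ = P * U * P' * (P * D * Q) := by rw [← hP1]; simp only [Matrix.mul_assoc]

/-- For large `a`, a solution of the congruence becomes an exact solution after left
multiplication by a unimodular matrix. -/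
lemma exists_exact {S T : Matrix (Fin m) (Fin m) ℤ_[p]} (hd : S.det ≠ 0)
    (hT : T.det ≠ 0) {c : ℕ} (hc : ∀ Y, Pe c Y → ∃ V : Matrix (Fin m) (Fin m) ℤ_[p],
      IsUnit V.det ∧ Vᵀ * S * V = S + Y) {a : ℕ} (ha : c + T.det.valuation + 1 ≤ a)
    {X : Matrix (Fin m) (Fin m) ℤ_[p]} (hX : X ∈ Sol S T a) :
    ∃ V : Matrix (Fin m) (Fin m) ℤ_[p], IsUnit V.det ∧ (V * X)ᵀ * S * (V * X) = T := by
  obtain ⟨hX0, hv⟩ := sol_val hd hT (by omega) hX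
  obtain ⟨X', h1, -⟩ := exists_quasi_inv hX0
  obtain ⟨Z, hZ⟩ := hX
  set d := X.det.valuation
  have hP : Pe (a - 2 * d) (X'ᵀ * ((p : ℤ_[p]) ^ (a - 2 * d) • (Z + Zᵀ)) * X') :=
    Pe.conj ⟨Z, rfl⟩ X'
  obtain ⟨V, hV, e⟩ := hc _ (hP.neg.mono (by omega))
  refine ⟨V, hV, ?_⟩
  have h1' : Xᵀ * X'ᵀ = (p : ℤ_[p]) ^ d • 1 := by
    rw [← transpose_mul, h1, transpose_smul, transpose_one]
  calc (V * X)ᵀ * S * (V * X) = Xᵀ * (Vᵀ * S * V) * X := by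
        simp only [transpose_mul, Matrix.mul_assoc]
    _ = Xᵀ * S * X - (Xᵀ * X'ᵀ) * ((p : ℤ_[p]) ^ (a - 2 * d) • (Z + Zᵀ)) * (X' * X) := by
        rw [e]; simp only [Matrix.mul_add, Matrix.add_mul, Matrix.mul_neg, Matrix.neg_mul,
          Matrix.mul_assoc, sub_eq_add_neg]
    _ = Xᵀ * S * X - (p : ℤ_[p]) ^ a • (Z + Zᵀ) := by
        rw [h1', h1]
        simp only [Matrix.smul_mul, Matrix.mul_smul, Matrix.one_mul, Matrix.mul_one, smul_smul]
        rw [← pow_add, ← pow_add, show d + (a - 2 * d + d) = a by omega]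
    _ = T := by rw [← hZ]; abel

/-- Each coset is a union of residue classes modulo `p^a` for `a = ν(det T) + 1`, so it is determined
by its reduction, and there are only finitely many of those. -/
lemma finite_cosets {S T : Matrix (Fin m) (Fin m) ℤ_[p]} (hd : S.det ≠ 0) (hT : T.det ≠ 0) :
    (Cos '' {X : Matrix (Fin m) (Fin m) ℤ_[p] | Xᵀ * S * X = T}).Finite := by
  refine Set.Finite.of_finite_image (f := fun E => red (T.det.valuation + 1) '' E)
    (Set.toFinite _) ?_
  have hs : ∀ E ∈ Cos '' {X : Matrix (Fin m) (Fin m) ℤ_[p] | Xᵀ * S * X = T},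
      Sat (T.det.valuation + 1) E := by
    rintro _ ⟨X, hX, rfl⟩
    have := eq_val hd hT hX
    exact sat_cos this.1 (by omega)
  intro E hE F hF h
  ext X
  rw [← (hs E hE).red_mem, ← (hs F hF).red_mem]
  exact iff_of_eq (congrArg (red _ X ∈ ·) h)

/-- For large `a` the solutions of `S[X] ≡ T` are partitioned by the cosets of exact solutions.
The exponent is a truncated quotient; it is `ν(det X)` as soon as an exact solution `X` exists. -/
lemma cnt_sol_eq {S T : Matrix (Fin m) (Fin m) ℤ_[p]} (hS : S.IsSymm) (hd : S.det ≠ 0)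
    (hT : T.det ≠ 0) :
    ∀ᶠ a in atTop, cnt a (Sol S T a) =
      (Cos '' {X : Matrix (Fin m) (Fin m) ℤ_[p] | Xᵀ * S * X = T}).ncard *
        p ^ ((T.det.valuation - S.det.valuation) / 2) * cnt a (Sol S S a) := by
  obtain ⟨c, hc⟩ := hensel hS hd
  have hfin := finite_cosets hd hT
  have hall : ∀ᶠ a in atTop, ∀ E ∈ Cos '' {X : Matrix (Fin m) (Fin m) ℤ_[p] | Xᵀ * S * X = T},
      cnt a (Sol S T a ∩ E) =
        p ^ ((T.det.valuation - S.det.valuation) / 2) * cnt a (Sol S S a) := by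
    rw [eventually_all_finite hfin]
    rintro _ ⟨X, hX, rfl⟩
    obtain ⟨h0, hv⟩ := eq_val hd hT hX
    have hX' : Xᵀ * S * X = T := hX
    filter_upwards [cnt_coset hS hd h0] with a ha
    rw [hX'] at ha
    rw [ha]
    congr 2
    omega
  filter_upwards [hall, eventually_ge_atTop (c + T.det.valuation + 1)] with a ha hac
  have : Fintype (Cos '' {X : Matrix (Fin m) (Fin m) ℤ_[p] | Xᵀ * S * X = T}) := hfin.fintype
  rw [cnt_partition a _
    (fun E : (Cos '' {X : Matrix (Fin m) (Fin m) ℤ_[p] | Xᵀ * S * X = T}) => Sol S T a ∩ E.1)]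
  · rw [Finset.sum_congr rfl fun E _ => ha E.1 E.2, Finset.sum_const, smul_eq_mul, mul_assoc,
      Finset.card_univ, ← Nat.card_eq_fintype_card, Nat.card_coe_set_eq]
  · rintro ⟨_, X, hX, rfl⟩ Y Z ⟨h1, h2⟩
    have := eq_val hd hT hX
    exact ⟨sat_sol hS (by omega) _ _ h1, sat_cos this.1 (by omega) _ _ h2⟩
  · intro X
    refine ⟨fun hX => ?_, fun ⟨_, h⟩ => h.1⟩
    obtain ⟨V, hV, e⟩ := exists_exact hd hT hc hac hX
    refine ⟨⟨Cos (V * X), V * X, e, rfl⟩, hX, ?_⟩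
    show X ∈ Cos (V * X)
    rw [cos_eq (⟨V, hV, rfl⟩ : V * X ∈ Cos X)]
    exact mem_cos_self X
  · rintro ⟨_, X, hX, rfl⟩ ⟨_, Y, hY, rfl⟩ Z ⟨-, h1⟩ ⟨-, h2⟩
    exact Subtype.ext ((cos_eq h1).symm.trans (cos_eq h2))

/-! ### The sequence of normalized counts is eventually constant -/

/-- Both sides count the solutions of `S[U] ≡ S mod p^a` by their classes modulo `p^{a+1}`. -/
lemma cnt_self_succ {S : Matrix (Fin m) (Fin m) ℤ_[p]} (hS : S.IsSymm) (hd : S.det ≠ 0) :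
    ∀ᶠ a in atTop, p ^ (m * (m + 1) / 2) * cnt (a + 1) (Sol S S (a + 1)) =
      p ^ (m * m) * cnt a (Sol S S a) := by
  obtain ⟨c, hc⟩ := hensel hS hd
  filter_upwards [eventually_ge_atTop (c + 1)] with a ha
  have h1 := cnt_lattice hS hc (fun _ _ => 1) (fun _ _ => rfl) (a := a + 1) (by omega)
    (fun _ _ => by omega)
  have hset : {U : Matrix (Fin m) (Fin m) ℤ_[p] | ∀ i j,
      (p : ℤ_[p]) ^ (a + 1 - 1) * (if i = j then 2 else 1) ∣ (Uᵀ * S * U - S) i j}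
      = Sol S S a := by
    ext U
    have hsy : (Uᵀ * S * U - S).IsSymm := by
      have : Sᵀ = S := hS
      simp [Matrix.IsSymm, Matrix.mul_assoc, this]
    simp only [Sol, Set.mem_ofPred_eq, pe_iff hsy, Nat.add_sub_cancel]
  have hsum : ∑ x : {x : Fin m × Fin m // x.1 ≤ x.2}, 1 = m * (m + 1) / 2 := by
    have := sum_le_pairs (m := m) (fun _ => 1)
    rw [Finset.sum_add_distrib] at this
    simp only [Finset.sum_const, Finset.card_univ, Fintype.card_fin, smul_eq_mul, mul_one] at this ⊢
    rw [mul_comm m, ← this]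
    omega
  rw [hset, hsum, cnt_succ a (sat_sol hS (by omega))] at h1
  exact h1.symm

lemma Acount_eq {S T : Matrix (Fin m) (Fin m) ℤ_[p]} (hS : S.IsSymm) (hT : T.IsSymm) (a : ℕ) :
    KM.Acount p S T a = cnt a (Sol S T a) := by
  have h : ∀ Y, KM.densCond p S T a Y ↔ Y ∈ Sol S T a := by
    intro Y
    have hsy : (Yᵀ * S * Y - T).IsSymm := by
      have h1 : Sᵀ = S := hS
      have h2 : Tᵀ = T := hT
      simp [Matrix.IsSymm, Matrix.mul_assoc, h1, h2]
    simp only [KM.densCond, Sol, Set.mem_ofPred_eq, pe_iff hsy]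
  unfold KM.Acount cnt
  rw [← Nat.card_coe_set_eq]
  congr 1
  congr 1
  ext X
  simp only [h, Set.mem_image, red]
  exact exists_congr fun Y => and_comm

/-- The factor in front of `#A_a` in the definition of the local density of two `m × m` matrices. -/
def nrm (p m a : ℕ) : ℝ :=
  (2 : ℝ) ^ (-1 : ℤ) * (p : ℝ) ^ ((a : ℤ) * (-((m : ℤ) * m) + ((m : ℤ) * (m + 1)) / 2))

lemma locDensPair_eq {S T : Matrix (Fin m) (Fin m) ℤ_[p]} (hS : S.IsSymm) (hT : T.IsSymm) :
    KM.locDensPair p S T = limUnder atTop fun a : ℕ => nrm p m a * (cnt a (Sol S T a) : ℝ) := by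
  simp only [KM.locDensPair, nrm, Acount_eq hS hT, Fintype.card_fin, if_true]

lemma tendsto_self {S : Matrix (Fin m) (Fin m) ℤ_[p]} (hS : S.IsSymm) (hd : S.det ≠ 0) :
    ∃ l, Tendsto (fun a : ℕ => nrm p m a * (cnt a (Sol S S a) : ℝ)) atTop (nhds l) := by
  obtain ⟨N, hN⟩ := eventually_atTop.1 (cnt_self_succ hS hd)
  have hp : (p : ℝ) ≠ 0 := by exact_mod_cast (Fact.out : p.Prime).ne_zero
  refine ⟨nrm p m N * (cnt N (Sol S S N) : ℝ), tendsto_const_nhds.congr' ?_⟩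
  filter_upwards [eventually_ge_atTop N] with a ha
  induction a, ha using Nat.le_induction with
  | base => rfl
  | succ a ha ih =>
    rw [ih]
    have h : (p : ℝ) ^ (m * (m + 1) / 2) * (cnt (a + 1) (Sol S S (a + 1)) : ℝ) =
      (p : ℝ) ^ (m * m) * (cnt a (Sol S S a) : ℝ) := by exact_mod_cast hN a ha
    have e : nrm p m (a + 1) * (p : ℝ) ^ (m * m) = nrm p m a * (p : ℝ) ^ (m * (m + 1) / 2) := by
      simp only [nrm, mul_assoc]
      congr 1
      rw [← zpow_natCast, ← zpow_natCast, ← zpow_add₀ hp, ← zpow_add₀ hp]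
      congr 1
      push_cast
      ring
    have hpp : (p : ℝ) ^ (m * m) ≠ 0 := pow_ne_zero _ hp
    apply mul_left_cancel₀ hpp
    calc (p : ℝ) ^ (m * m) * (nrm p m a * (cnt a (Sol S S a) : ℝ))
        = nrm p m a * ((p : ℝ) ^ (m * m) * (cnt a (Sol S S a) : ℝ)) := by ring
      _ = (nrm p m a * (p : ℝ) ^ (m * (m + 1) / 2)) * (cnt (a + 1) (Sol S S (a + 1)) : ℝ) := by
          rw [← h]; ring
      _ = _ := by rw [← e]; ring

/-! ### Passage to the field of fractions -/

lemma q_eq (A : Matrix (Fin m) (Fin m) ℤ_[p]) :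
    KM.q p A = A.map (algebraMap ℤ_[p] ℚ_[p]) := rfl

lemma q_inj : Function.Injective (KM.q p (n := Fin m) (m := Fin m)) := by
  intro A B h
  ext i j
  exact Subtype.coe_injective (congrFun (congrFun h i) j)

lemma q_mul (A B : Matrix (Fin m) (Fin m) ℤ_[p]) : KM.q p (A * B) = KM.q p A * KM.q p B := by
  simp only [q_eq, Matrix.map_mul]

lemma q_transpose (A : Matrix (Fin m) (Fin m) ℤ_[p]) : KM.q p Aᵀ = (KM.q p A)ᵀ := rfl

/-- Up to left multiplication by a unimodular matrix, the elements of `Ω̃(S,T)` are the exact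
solutions of `S[X] = T`. -/
lemma mem_omega_iff {S T : Matrix (Fin m) (Fin m) ℤ_[p]} (hd : S.det ≠ 0) (hT : T.det ≠ 0)
    (W : Matrix (Fin m) (Fin m) ℤ_[p]) :
    (W.det ≠ 0 ∧ KM.RatEquiv p (KM.q p S) (KM.conjInv p (KM.q p T) W)) ↔
      ∃ U : Matrix (Fin m) (Fin m) ℤ_[p], IsUnit U.det ∧ (U * W)ᵀ * S * (U * W) = T := by
  have hu : W.det ≠ 0 → IsUnit (KM.q p W).det := by
    intro h
    rw [q_eq, ← RingHom.mapMatrix_apply, ← RingHom.map_det, isUnit_iff_ne_zero]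
    simpa using h
  constructor
  · rintro ⟨hW, U, hU, e⟩
    refine ⟨U, hU, q_inj ?_⟩
    have hW' := nonsing_inv_mul _ (hu hW)
    have hW'' : (KM.q p W)ᵀ * ((KM.q p W)⁻¹)ᵀ = 1 := by
      rw [← transpose_mul, hW', transpose_one]
    unfold KM.conjInv at e
    simp only [q_mul, q_transpose, transpose_mul]
    calc (KM.q p W)ᵀ * (KM.q p U)ᵀ * KM.q p S * (KM.q p U * KM.q p W)
        = (KM.q p W)ᵀ * ((KM.q p U)ᵀ * KM.q p S * KM.q p U) * KM.q p W := by
          simp only [Matrix.mul_assoc]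
      _ = ((KM.q p W)ᵀ * ((KM.q p W)⁻¹)ᵀ) * KM.q p T * ((KM.q p W)⁻¹ * KM.q p W) := by
          rw [← e]; simp only [Matrix.mul_assoc]
      _ = KM.q p T := by rw [hW', hW'', Matrix.one_mul, Matrix.mul_one]
  · rintro ⟨U, hU, e⟩
    have hW : W.det ≠ 0 := by
      have := (eq_val hd hT e).1
      rw [det_mul] at this
      exact right_ne_zero_of_mul this
    refine ⟨hW, U, hU, ?_⟩
    have hW' := mul_nonsing_inv _ (hu hW)
    have hW'' : ((KM.q p W)⁻¹)ᵀ * (KM.q p W)ᵀ = 1 := by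
      rw [← transpose_mul, hW', transpose_one]
    unfold KM.conjInv
    rw [← e]
    simp only [q_mul, q_transpose, transpose_mul]
    calc _ = (((KM.q p W)⁻¹)ᵀ * (KM.q p W)ᵀ) * ((KM.q p U)ᵀ * KM.q p S * KM.q p U) *
          (KM.q p W * (KM.q p W)⁻¹) := by simp only [Matrix.mul_assoc]
      _ = _ := by rw [hW', hW'', Matrix.one_mul, Matrix.mul_one]

lemma cosets_eq {S T : Matrix (Fin m) (Fin m) ℤ_[p]} (hd : S.det ≠ 0) (hT : T.det ≠ 0) :
    (fun W : Matrix (Fin m) (Fin m) ℤ_[p] => {W' | KM.SameLeft p W W'}) ''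
      {W | W.det ≠ 0 ∧ KM.RatEquiv p (KM.q p S) (KM.conjInv p (KM.q p T) W)} =
    Cos '' {X : Matrix (Fin m) (Fin m) ℤ_[p] | Xᵀ * S * X = T} := by
  ext E
  constructor
  · rintro ⟨W, hW, rfl⟩
    obtain ⟨U, hU, e⟩ := (mem_omega_iff hd hT W).1 hW
    exact ⟨U * W, e, cos_eq ⟨U, hU, rfl⟩⟩
  · rintro ⟨X, hX, rfl⟩
    exact ⟨X, (mem_omega_iff hd hT X).2 ⟨1, by simp, by simpa using hX⟩, rfl⟩

end

end KMaux

/-- `α_p(S,T) = #(GL_m(ℤ_p)\Ω̃(S,T)) · p^{(ν(det T)-ν(det S))/2} · α_p(S)`. -/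
theorem statement5 (p : ℕ) [Fact p.Prime] (m : ℕ) (hm : 1 ≤ m)
    (S T : Matrix (Fin m) (Fin m) ℤ_[p])
    (hSs : S.IsSymm) (hSd : S.det ≠ 0) (hTs : T.IsSymm) (hTd : T.det ≠ 0) :
    let Ω : Set (Matrix (Fin m) (Fin m) ℤ_[p]) :=
      {W | W.det ≠ 0 ∧ KM.RatEquiv p (KM.q p S) (KM.conjInv p (KM.q p T) W)}
    let cosets := (fun W => {W' | KM.SameLeft p W W'}) '' Ω
    cosets.Finite ∧
      KM.locDensPair p S T =
        (cosets.ncard : ℝ) *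
          (p : ℝ) ^ (((T.det.valuation - S.det.valuation : ℤ) : ℝ) / 2) *
          KM.locDens p S := by
  intro Ω cosets
  have hco : cosets = KMaux.Cos '' {X : Matrix (Fin m) (Fin m) ℤ_[p] | Xᵀ * S * X = T} :=
    KMaux.cosets_eq hSd hTd
  rw [hco]
  refine ⟨KMaux.finite_cosets hSd hTd, ?_⟩
  obtain ⟨l, hl⟩ := KMaux.tendsto_self hSs hSd
  rw [KM.locDens, KMaux.locDensPair_eq hSs hTs, KMaux.locDensPair_eq hSs hSs, hl.limUnder_eq]
  apply Tendsto.limUnder_eq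
  refine (hl.const_mul _).congr' ?_
  filter_upwards [KMaux.cnt_sol_eq hSs hSd hTd] with a ha
  rw [ha]
  rcases Set.eq_empty_or_nonempty {X : Matrix (Fin m) (Fin m) ℤ_[p] | Xᵀ * S * X = T} with h | h
  · simp [h]
  · obtain ⟨X, hX⟩ := h
    -- `ν(det T) - ν(det S)` is even, so the truncated quotient is the real exponent
    have hv := (KMaux.eq_val hSd hTd hX).2
    have h1 : (T.det.valuation - S.det.valuation) / 2 = X.det.valuation := by omega
    have h2 : ((T.det.valuation - S.det.valuation : ℤ) : ℝ) / 2 = (X.det.valuation : ℝ) := by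
      rw [← hv]; push_cast; ring
    rw [h1, h2, Real.rpow_natCast]
    push_cast
    ring
end
end

section
/- Let p be an odd prime, m ≥ 1 and 0 ≤ n₀ ≤ m. Let Θ ∈ GL_{n₀}(ℤ_p) ∩ S_{n₀}(ℤ_p) be a unimodular symmetric matrix and B₁ ∈ S_{m-n₀}(ℤ_p)^×. For C ∈ S_l(ℤ_p)^× set Ω̃(C) = {W ∈ M_l(ℤ_p) : det W ≠ 0 and C[W^{-1}] ∈ S_l(ℤ_p)}. Then the map W ↦ 1_{n₀} ⊥ W induces a bijection from GL_{m-n₀}(ℤ_p)\Ω̃(B₁) onto GL_m(ℤ_p)\Ω̃(Θ ⊥ B₁); moreover, for every i ≥ 0, this bijection restricts to a bijection between the orbits contained in D_{m-n₀,i} and the orbits contained in D_{m,i}. -/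
/-!
Membership `W ∈ Ω̃(C)` means that `det W ≠ 0` and `C = Wᵀ D W` for an integral symmetric `D`
(`KM.mem_OmS_iff`). With this, `1 ⊥ W` lies in `Ω̃(Θ ⊥ B₁)` because `Θ ⊥ D` is integral, and
comparing blocks in `U (1 ⊥ W₁) = 1 ⊥ W₂` gives injectivity on cosets.

For surjectivity let `Vᵀ D V = Θ ⊥ B₁` and write `V = (X | Y)`. Then `Xᵀ D X = Θ` is unimodular, so
the columns of `X` span a unimodular sublattice of the lattice with Gram matrix `D`, which therefore
splits off as an orthogonal summand. If `Z` is a basis of the complement, `(X | Z)` is invertible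
over `ℤ_p`, and `Xᵀ D Y = 0` forces `Y = Z W`, whence `V = (X | Z) (1 ⊥ W)`
(`KM.exists_complement`, `KM.exists_block_form`). Moreover `B₁ = Wᵀ (Zᵀ D Z) W`.

For the double cosets, the Smith normal form shows that `W ∈ D_{n,i}` exactly when `W` divides `p`
in the matrix ring and `det W` is associated to `p ^ i` (`KM.mem_Dset_iff`); both conditions hold
for `1 ⊥ W` if and only if they hold for `W`.
-/

open Matrix Filter

open scoped Classical

noncomputable section

namespace KM

variable {p : ℕ} [Fact p.Prime]

/-! ### Integral matrices inside rational ones -/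

lemma q_eq_map {n m : Type*} (A : Matrix n m ℤ_[p]) :
    q p A = A.map (PadicInt.Coe.ringHom (p := p)) := rfl

lemma q_mul {n m l : Type*} [Fintype m] (A : Matrix n m ℤ_[p]) (B : Matrix m l ℤ_[p]) :
    q p (A * B) = q p A * q p B := by
  simp only [q_eq_map, Matrix.map_mul]

lemma q_transpose {n m : Type*} (A : Matrix n m ℤ_[p]) : q p Aᵀ = (q p A)ᵀ := rfl

lemma q_injective {n m : Type*} : Function.Injective (q p : Matrix n m ℤ_[p] → _) := by
  intro A B h
  ext i j
  exact Subtype.ext (congrFun (congrFun h i) j)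

lemma q_det {n : Type*} [Fintype n] [DecidableEq n] (A : Matrix n n ℤ_[p]) :
    (q p A).det = (A.det : ℚ_[p]) := by
  rw [q_eq_map]
  exact (RingHom.map_det (PadicInt.Coe.ringHom (p := p)) A).symm

lemma isUnit_q_det {n : Type*} [Fintype n] [DecidableEq n] {A : Matrix n n ℤ_[p]}
    (h : A.det ≠ 0) : IsUnit (q p A).det := by
  rw [q_det, isUnit_iff_ne_zero]
  simpa using h

/-- A description of `Ω̃(C)` without denominators: `C[W⁻¹]` is integral exactly when
`C = D[W]` for an integral symmetric `D`. -/
lemma mem_OmS_iff {n : Type*} [Fintype n] [DecidableEq n] {C W : Matrix n n ℤ_[p]} :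
    W ∈ OmS p C ↔ W.det ≠ 0 ∧ ∃ D : Matrix n n ℤ_[p], D.IsSymm ∧ C = Wᵀ * D * W := by
  constructor
  · rintro ⟨hW, hs, hi⟩
    refine ⟨hW, ?_⟩
    choose D hD using hi
    have hD' : conjInv p (q p C) W = q p (Matrix.of D) := by
      ext i j
      exact hD i j
    refine ⟨Matrix.of D, ?_, ?_⟩
    · apply q_injective
      rw [q_transpose, ← hD']
      exact hs
    · apply q_injective
      have hu := isUnit_q_det hW
      rw [q_mul, q_mul, ← hD', q_transpose, conjInv, ← Matrix.mul_assoc, ← Matrix.mul_assoc,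
        ← Matrix.transpose_mul, Matrix.nonsing_inv_mul _ hu, Matrix.mul_assoc,
        Matrix.nonsing_inv_mul _ hu]
      simp
  · rintro ⟨hW, D, hD, rfl⟩
    have hu := isUnit_q_det hW
    have key : conjInv p (q p (Wᵀ * D * W)) W = q p D := by
      rw [q_mul, q_mul, q_transpose, conjInv, ← Matrix.mul_assoc, ← Matrix.mul_assoc,
        ← Matrix.transpose_mul, Matrix.mul_nonsing_inv _ hu, Matrix.mul_assoc,
        Matrix.mul_nonsing_inv _ hu]
      simp
    refine ⟨hW, ?_, ?_⟩
    · rw [key, Matrix.IsSymm, ← q_transpose, hD]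
    · rw [key]
      exact fun i j => ⟨D i j, rfl⟩

/-! ### Splitting off a unimodular block -/

/-- A matrix with a left inverse over a principal ideal domain can be completed to an invertible
square matrix. The added columns `Z` form a basis of the kernel of the left inverse `F`, and `G`
gives the coordinates of the projection onto that kernel. -/
lemma exists_complement {R : Type*} [CommRing R] [IsDomain R] [IsPrincipalIdealRing R] {a b : ℕ}
    (X : Matrix (Fin a ⊕ Fin b) (Fin a) R) (F : Matrix (Fin a) (Fin a ⊕ Fin b) R)
    (h : F * X = 1) :
    ∃ (Z : Matrix (Fin a ⊕ Fin b) (Fin b) R) (G : Matrix (Fin b) (Fin a ⊕ Fin b) R),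
      X * F + Z * G = 1 := by
  set f := Matrix.toLin' F with hf
  have hsurj : Function.Surjective f := by
    intro v
    refine ⟨X *ᵥ v, ?_⟩
    simp [hf, h]
  have hrank : Module.finrank R (LinearMap.ker f) = b := by
    have h1 := Submodule.finrank_quotient_add_finrank (LinearMap.ker f)
    rw [f.quotKerEquivRange.finrank_eq] at h1
    rw [LinearMap.range_eq_top.2 hsurj] at h1
    simp at h1
    exact h1
  let B : Module.Basis (Fin b) R (LinearMap.ker f) := Module.finBasisOfFinrankEq R _ hrank
  have hmem : ∀ v : Fin a ⊕ Fin b → R, v - X *ᵥ (F *ᵥ v) ∈ LinearMap.ker f := by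
    intro v
    rw [LinearMap.mem_ker, hf, Matrix.toLin'_apply, Matrix.mulVec_sub, Matrix.mulVec_mulVec, h,
      Matrix.one_mulVec, sub_self]
  refine ⟨Matrix.of fun i j => (B j : Fin a ⊕ Fin b → R) i,
    Matrix.of fun j i => B.repr ⟨_, hmem (Pi.single i 1)⟩ j, ?_⟩
  ext i j
  have h2 := congrFun (congrArg Subtype.val (B.sum_repr ⟨_, hmem (Pi.single j 1)⟩)) i
  simp only [AddSubmonoidClass.coe_finsetSum, Finset.sum_apply, SetLike.val_smul, Pi.smul_apply,
    smul_eq_mul, Pi.sub_apply] at h2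
  rw [Matrix.add_apply, Matrix.mul_apply (M := Matrix.of _)]
  simp only [Matrix.of_apply]
  rw [Finset.sum_congr rfl (fun x _ => mul_comm _ _), h2]
  rw [Matrix.mulVec_mulVec, Matrix.mulVec_single_one]
  simp [Matrix.one_apply, Pi.single_apply]

/-- If `D[V] = Θ ⊥ B` with `Θ` unimodular, the first columns of `V` span a unimodular sublattice
for `D`, so its orthogonal complement is a direct summand; in an adapted basis `V` becomes
`1 ⊥ W`. -/
lemma exists_block_form {a b : ℕ} {Θ : Matrix (Fin a) (Fin a) ℤ_[p]} (hΘ : IsUnit Θ.det)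
    {B : Matrix (Fin b) (Fin b) ℤ_[p]} {V D : Matrix (Fin a ⊕ Fin b) (Fin a ⊕ Fin b) ℤ_[p]}
    (h : Matrix.fromBlocks Θ 0 0 B = Vᵀ * D * V) :
    ∃ (U : Matrix (Fin a ⊕ Fin b) (Fin a ⊕ Fin b) ℤ_[p]) (W : Matrix (Fin b) (Fin b) ℤ_[p]),
      IsUnit U.det ∧ V = U * Matrix.fromBlocks 1 0 0 W := by
  set X := V.toCols₁ with hX
  set Y := V.toCols₂ with hY
  have hV : V = Matrix.fromCols X Y := (Matrix.fromCols_toCols V).symm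
  rw [hV, Matrix.transpose_fromCols, Matrix.fromRows_mul, Matrix.fromRows_mul_fromCols,
    Matrix.fromBlocks_inj] at h
  obtain ⟨h11, h12, -, -⟩ := h
  obtain ⟨Z, G, hZ⟩ := exists_complement X (Θ⁻¹ * (Xᵀ * D))
    (by rw [Matrix.mul_assoc, ← h11, Matrix.nonsing_inv_mul _ hΘ])
  refine ⟨Matrix.fromCols X Z, G * Y, ?_, ?_⟩
  · refine Matrix.isUnit_det_of_right_inverse
      (B := Matrix.fromRows (Θ⁻¹ * (Xᵀ * D)) G) ?_
    rw [Matrix.fromCols_mul_fromRows, hZ]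
  · have hYZ : Z * (G * Y) = Y := by
      have := congrArg (· * Y) hZ
      simp only [Matrix.add_mul, Matrix.mul_assoc, Matrix.one_mul] at this
      rw [← Matrix.mul_assoc Xᵀ, ← h12] at this
      simpa using this
    rw [Matrix.fromCols_mul_fromBlocks, hYZ, hV]
    simp

/-! ### Elementary divisors -/

/-- Smith normal form of a nonsingular square matrix over a principal ideal domain. -/
lemma exists_smith {R : Type*} [CommRing R] [IsDomain R] [IsPrincipalIdealRing R]
    {n : Type*} [Fintype n] [DecidableEq n] (W : Matrix n n R) (hW : W.det ≠ 0) :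
    ∃ (P Q : Matrix n n R) (d : n → R), IsUnit P.det ∧ IsUnit Q.det ∧
      W = P * Matrix.diagonal d * Q := by
  set f := Matrix.toLin' W with hf
  have hinj : Function.Injective f := by
    intro v w hvw
    rw [← sub_eq_zero]
    refine Matrix.eq_zero_of_mulVec_eq_zero hW ?_
    simpa [hf, Matrix.mulVec_sub, sub_eq_zero] using hvw
  obtain ⟨b, d, ab, hab⟩ := Submodule.exists_smith_normal_form_of_rank_eq
    (N := LinearMap.range f) (Pi.basisFun R n) (LinearMap.finrank_range_of_inj hinj)
  have hP : IsUnit ((Pi.basisFun R n).toMatrix b).det := by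
    rw [← Module.Basis.det_apply]
    exact Module.Basis.isUnit_det _ _
  have hex : ∀ j, ∃ v, f v = (ab j : n → R) := fun j => (ab j).2
  choose Q' hQ' using hex
  -- `T` expresses the columns of `W` in the basis `ab` of the column lattice; the vectors `Q' j`
  -- express `ab` in terms of the columns of `W`, so the two matrices are inverse to each other.
  let T : Matrix n n R := Matrix.of fun i j =>
    ab.repr ⟨f (Pi.single j 1), LinearMap.mem_range_self _ _⟩ i
  have h1 : W = (Pi.basisFun R n).toMatrix b * Matrix.diagonal d * T := by
    ext i j
    have h2 := congrFun (congrArg Subtype.val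
      (ab.sum_repr ⟨f (Pi.single j 1), LinearMap.mem_range_self _ _⟩)) i
    simp only [AddSubmonoidClass.coe_finsetSum, Finset.sum_apply, SetLike.val_smul, hab,
      Pi.smul_apply, smul_eq_mul] at h2
    have h3 : f (Pi.single j 1) i = W i j := by simp [hf]
    rw [← h3, ← h2, Matrix.mul_apply]
    refine Finset.sum_congr rfl fun x _ => ?_
    simp only [Matrix.mul_diagonal, Module.Basis.toMatrix_apply, Pi.basisFun_repr, T,
      Matrix.of_apply]
    ring
  have h4 : (Pi.basisFun R n).toMatrix b * Matrix.diagonal d = W * (Matrix.of Q')ᵀ := by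
    ext i j
    have h5 := congrFun (hQ' j) i
    rw [hab] at h5
    simp only [hf, Matrix.toLin'_apply, Matrix.mulVec, dotProduct, Pi.smul_apply,
      smul_eq_mul] at h5
    rw [Matrix.mul_diagonal]
    simp only [Module.Basis.toMatrix_apply, Pi.basisFun_repr, Matrix.mul_apply,
      Matrix.transpose_apply, Matrix.of_apply]
    rw [h5, mul_comm]
  refine ⟨_, T, d, hP, ?_, h1⟩
  rw [h4] at h1
  have h6 := congrArg Matrix.det h1
  rw [Matrix.det_mul, Matrix.det_mul, mul_assoc] at h6
  have h7 := mul_left_cancel₀ hW ((mul_one _).trans h6)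
  exact IsUnit.of_mul_eq_one _ ((mul_comm _ _).trans h7.symm)

lemma det_diagonal_ite {n : Type*} [Fintype n] [DecidableEq n] (s : Finset n) :
    (Matrix.diagonal (fun j => if j ∈ s then (p : ℤ_[p]) else 1)).det = (p : ℤ_[p]) ^ s.card := by
  rw [Matrix.det_diagonal]
  simp

/-- Membership in `D_{n,i}` amounts to two conditions that see a block `1 ⊥ W` only through `W`:
`W` divides `p`, and `det W` is associated to `p ^ i`. -/
lemma mem_Dset_iff {n : Type*} [Fintype n] [DecidableEq n] {i : ℕ} {W : Matrix n n ℤ_[p]} :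
    W ∈ Dset p i ↔ Associated W.det ((p : ℤ_[p]) ^ i) ∧
      ∃ M : Matrix n n ℤ_[p], W * M = (p : ℤ_[p]) • (1 : Matrix n n ℤ_[p]) := by
  have hp0 : (p : ℤ_[p]) ≠ 0 := PadicInt.prime_p.ne_zero
  constructor
  · rintro ⟨s, rfl, U, V, hU, hV, rfl⟩
    constructor
    · rw [Matrix.det_mul, Matrix.det_mul, det_diagonal_ite]
      exact (associated_mul_unit_left _ _ hV).trans (associated_unit_mul_left _ _ hU)
    · refine ⟨V⁻¹ * Matrix.diagonal (fun j => if j ∈ s then 1 else (p : ℤ_[p])) * U⁻¹, ?_⟩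
      have hd : Matrix.diagonal (fun j => if j ∈ s then (p : ℤ_[p]) else 1) *
          Matrix.diagonal (fun j => if j ∈ s then 1 else (p : ℤ_[p])) =
          (p : ℤ_[p]) • (1 : Matrix n n ℤ_[p]) := by
        rw [Matrix.diagonal_mul_diagonal, Matrix.smul_one_eq_diagonal]
        congr 1
        ext j
        split_ifs <;> simp
      set E := Matrix.diagonal (fun j => if j ∈ s then (p : ℤ_[p]) else 1)
      set E' := Matrix.diagonal (fun j => if j ∈ s then 1 else (p : ℤ_[p]))
      calc U * E * V * (V⁻¹ * E' * U⁻¹) = U * E * (V * V⁻¹) * E' * U⁻¹ := by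
            simp only [Matrix.mul_assoc]
        _ = U * (E * E') * U⁻¹ := by
            rw [Matrix.mul_nonsing_inv _ hV, Matrix.mul_one, Matrix.mul_assoc U]
        _ = _ := by
            rw [hd, Matrix.mul_smul, Matrix.smul_mul, Matrix.mul_one,
              Matrix.mul_nonsing_inv _ hU]
  · rintro ⟨hdet, M, hM⟩
    have hW : W.det ≠ 0 := fun h => by
      rw [h] at hdet
      exact pow_ne_zero i hp0 ((Associated.comm.1 hdet).eq_zero_iff.2 rfl)
    obtain ⟨P, Q, d, hP, hQ, hWd⟩ := exists_smith W hW
    have hdM : Matrix.diagonal d * (Q * M * P) = (p : ℤ_[p]) • (1 : Matrix n n ℤ_[p]) := by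
      have : P * (Matrix.diagonal d * (Q * M)) = (p : ℤ_[p]) • 1 := by
        rw [← hM, hWd]
        simp only [Matrix.mul_assoc]
      calc Matrix.diagonal d * (Q * M * P)
          = P⁻¹ * (P * (Matrix.diagonal d * (Q * M))) * P := by
            rw [← Matrix.mul_assoc P⁻¹, Matrix.nonsing_inv_mul _ hP, Matrix.one_mul]
            simp only [Matrix.mul_assoc]
        _ = _ := by
            rw [this, Matrix.mul_smul, Matrix.smul_mul, Matrix.mul_one,
              Matrix.nonsing_inv_mul _ hP]
    have hdvd : ∀ j, d j ∣ (p : ℤ_[p]) := fun j => by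
      have := congrFun (congrFun hdM j) j
      rw [Matrix.diagonal_mul] at this
      exact ⟨_, by simpa using this.symm⟩
    let t : Finset n := Finset.univ.filter fun j => ¬ IsUnit (d j)
    have hass : ∀ j, Associated (if j ∈ t then (p : ℤ_[p]) else 1) (d j) := fun j => by
      by_cases hj : IsUnit (d j)
      · simpa [t, hj] using (associated_one_iff_isUnit.2 hj).symm
      · have := (PadicInt.prime_p (p := p)).irreducible.dvd_iff.1 (hdvd j)
        simpa [t, hj] using this
    choose u hu using hass
    have hE : Matrix.diagonal d = Matrix.diagonal (fun j => if j ∈ t then (p : ℤ_[p]) else 1) *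
        Matrix.diagonal (fun j => (u j : ℤ_[p])) := by
      rw [Matrix.diagonal_mul_diagonal]
      congr 1
      ext j
      rw [hu]
    have hV : IsUnit (Matrix.diagonal (fun j => (u j : ℤ_[p])) * Q).det := by
      rw [Matrix.det_mul, Matrix.det_diagonal]
      refine IsUnit.mul ?_ hQ
      rw [← Units.coe_prod]
      exact Units.isUnit _
    have hWt : W = P * Matrix.diagonal (fun j => if j ∈ t then (p : ℤ_[p]) else 1) *
        (Matrix.diagonal (fun j => (u j : ℤ_[p])) * Q) := by
      rw [hWd, hE]
      simp only [Matrix.mul_assoc]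
    refine ⟨t, ?_, P, _, hP, hV, hWt⟩
    have hdet2 : Associated W.det ((p : ℤ_[p]) ^ t.card) := by
      rw [hWt, Matrix.det_mul, Matrix.det_mul, det_diagonal_ite]
      exact (associated_mul_unit_left _ _ hV).trans (associated_unit_mul_left _ _ hP)
    have hpp := hdet2.symm.trans hdet
    have hnu := (PadicInt.prime_p (p := p)).not_isUnit
    exact le_antisymm ((pow_dvd_pow_iff hp0 hnu).1 hpp.dvd)
      ((pow_dvd_pow_iff hp0 hnu).1 hpp.symm.dvd)

lemma fromBlocks_mem_Dset_iff {m n : Type*} [Fintype m] [DecidableEq m] [Fintype n]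
    [DecidableEq n] {i : ℕ} {W : Matrix n n ℤ_[p]} :
    Matrix.fromBlocks (1 : Matrix m m ℤ_[p]) 0 0 W ∈ Dset p i ↔ W ∈ Dset p i := by
  rw [mem_Dset_iff, mem_Dset_iff, Matrix.det_fromBlocks_zero₂₁, Matrix.det_one, one_mul]
  refine and_congr_right fun _ => ⟨?_, ?_⟩
  · rintro ⟨M, hM⟩
    refine ⟨M.toBlocks₂₂, ?_⟩
    rw [← Matrix.fromBlocks_toBlocks M, ← Matrix.fromBlocks_one, Matrix.fromBlocks_smul,
      Matrix.fromBlocks_multiply, Matrix.fromBlocks_inj] at hM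
    simpa using hM.2.2.2
  · rintro ⟨M, hM⟩
    refine ⟨Matrix.fromBlocks ((p : ℤ_[p]) • 1) 0 0 M, ?_⟩
    rw [← Matrix.fromBlocks_one (l := m), Matrix.fromBlocks_smul, Matrix.fromBlocks_multiply]
    simp [hM]

/-! ### The induced map on cosets -/

lemma fromBlocks_sameLeft_iff {m n : Type*} [Fintype m] [DecidableEq m] [Fintype n]
    [DecidableEq n] {W₁ W₂ : Matrix n n ℤ_[p]} :
    SameLeft p (Matrix.fromBlocks (1 : Matrix m m ℤ_[p]) 0 0 W₁) (Matrix.fromBlocks 1 0 0 W₂) ↔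
      SameLeft p W₁ W₂ := by
  constructor
  · rintro ⟨U, hU, h⟩
    rw [← Matrix.fromBlocks_toBlocks U] at hU h
    rw [Matrix.fromBlocks_multiply, Matrix.fromBlocks_inj] at h
    obtain ⟨h11, -, h21, h22⟩ := h
    simp only [Matrix.mul_one, Matrix.mul_zero, add_zero, zero_add] at h11 h21 h22
    rw [← h11, ← h21, Matrix.det_fromBlocks_zero₂₁, Matrix.det_one, one_mul] at hU
    exact ⟨_, hU, h22⟩
  · rintro ⟨U, hU, rfl⟩
    refine ⟨Matrix.fromBlocks 1 0 0 U, ?_, ?_⟩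
    · simpa [Matrix.det_fromBlocks_zero₂₁] using hU
    · simp [Matrix.fromBlocks_multiply]

end KM

/-- for odd `p`, `W ↦ 1_{n₀} ⊥ W` induces a bijection
`GL\Ω̃(B₁) ≃ GL\Ω̃(Θ ⊥ B₁)` compatible with the double cosets `D_{·,i}`. -/
theorem statement6 (p : ℕ) [Fact p.Prime] (hp : p ≠ 2) (n₀ k : ℕ) (hm : 1 ≤ n₀ + k)
    (Θ : Matrix (Fin n₀) (Fin n₀) ℤ_[p]) (hΘs : Θ.IsSymm) (hΘu : IsUnit Θ.det)
    (B₁ : Matrix (Fin k) (Fin k) ℤ_[p]) (hB₁s : B₁.IsSymm) (hB₁d : B₁.det ≠ 0) :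
    KM.InducesLeftBij p
      (fun W => Matrix.fromBlocks (1 : Matrix (Fin n₀) (Fin n₀) ℤ_[p]) 0 0 W)
      (KM.OmS p B₁) (KM.OmS p (Matrix.fromBlocks Θ 0 0 B₁)) ∧
    ∀ i : ℕ, ∀ W ∈ KM.OmS p B₁,
      (W ∈ KM.Dset p i ↔
        Matrix.fromBlocks (1 : Matrix (Fin n₀) (Fin n₀) ℤ_[p]) 0 0 W ∈ KM.Dset p i) := by
  refine ⟨⟨?_, ?_, ?_⟩, fun i W _ => KM.fromBlocks_mem_Dset_iff.symm⟩
  · intro W hW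
    obtain ⟨hd, D, hD, hB⟩ := KM.mem_OmS_iff.1 hW
    refine KM.mem_OmS_iff.2 ⟨?_, Matrix.fromBlocks Θ 0 0 D, ?_, ?_⟩
    · simpa [Matrix.det_fromBlocks_zero₂₁] using hd
    · exact Matrix.IsSymm.fromBlocks hΘs (by simp) hD
    · simp [Matrix.fromBlocks_transpose, Matrix.fromBlocks_multiply, hB]
  · exact fun W₁ _ W₂ _ => KM.fromBlocks_sameLeft_iff.symm
  · intro V hV
    obtain ⟨hd, D, hD, hB⟩ := KM.mem_OmS_iff.1 hV
    obtain ⟨U, W, hU, rfl⟩ := KM.exists_block_form hΘu hB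
    refine ⟨W, KM.mem_OmS_iff.2 ⟨?_, (Uᵀ * D * U).toBlocks₂₂, ?_, ?_⟩, U, hU, rfl⟩
    · rintro h
      apply hd
      rw [Matrix.det_mul, Matrix.det_fromBlocks_zero₂₁, h, mul_zero, mul_zero]
    · have hs : (Uᵀ * D * U).IsSymm := by
        simp only [Matrix.IsSymm, Matrix.transpose_mul, Matrix.transpose_transpose, hD.eq,
          Matrix.mul_assoc]
      ext i j
      exact congrFun (congrFun hs (Sum.inr i)) (Sum.inr j)
    · have h2 : Matrix.fromBlocks Θ 0 0 B₁ =
          (Matrix.fromBlocks (1 : Matrix (Fin n₀) (Fin n₀) ℤ_[p]) 0 0 W)ᵀ * (Uᵀ * D * U) *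
            Matrix.fromBlocks 1 0 0 W := by
        rw [hB, Matrix.transpose_mul]
        simp only [Matrix.mul_assoc]
      rw [← Matrix.fromBlocks_toBlocks (Uᵀ * D * U), Matrix.fromBlocks_transpose,
        Matrix.fromBlocks_multiply, Matrix.fromBlocks_multiply, Matrix.fromBlocks_inj] at h2
      simpa using h2.2.2.2
end
end
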